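/- arXiv:2507.21405 — 2 statements merged into one kernel-verified Lean document; each statement's English description precedes it below -/
import Mathlib

section
/- Let X ⊆ ℂᴺ be a complex analytic set and x ∈ X, and let I(X,x) denote the ideal of germs of holomorphic functions at x vanishing on X. Then the tangent cone C(X,x) equals the common zero set V(I_*(X,x)) of the ideal I_*(X,x) generated by the initial parts (lowest-degree homogeneous terms of the Taylor expansions at x) of all functions in I(X,x). -/
open Filter Topology Set

noncomputable section

/-- `ℂⁿ` with its Euclidean (Hermitian) norm. -/
abbrev Cn (n : ℕ) : Type := EuclideanSpace ℂ (Fin n)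

/-- The tangent cone of `X` at `x`: all limits `v` of `tₖ • (xₖ - x)` with `xₖ ∈ X`,
`xₖ → x` and `tₖ ∈ ℂ`. -/
def tangentConeSet {E : Type*} [NormedAddCommGroup E] [NormedSpace ℂ E]
    (X : Set E) (x : E) : Set E :=
  {v | ∃ (xs : ℕ → E) (ts : ℕ → ℂ), (∀ k, xs k ∈ X) ∧
    Filter.Tendsto xs Filter.atTop (𝓝 x) ∧
    Filter.Tendsto (fun k => ts k • (xs k - x)) Filter.atTop (𝓝 v)}

/-- `X` is a complex analytic subset of the open set `Ω`: it is closed in `Ω` and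
locally the common zero set of holomorphic functions. -/
def IsAnalyticSetIn {E : Type*} [NormedAddCommGroup E] [NormedSpace ℂ E]
    (X Ω : Set E) : Prop :=
  IsOpen Ω ∧ X ⊆ Ω ∧ IsClosed (Subtype.val ⁻¹' X : Set Ω) ∧
  ∀ p ∈ Ω, ∃ U : Set E, IsOpen U ∧ p ∈ U ∧ U ⊆ Ω ∧
    ∃ S : Set (E → ℂ), (∀ g ∈ S, AnalyticOnNhd ℂ g U) ∧
      X ∩ U = {x ∈ U | ∀ g ∈ S, g x = 0}

/-! For a direction `v` outside the tangent cone, choose coordinates `(z, t) ∈ E × ℂ` centred at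
the point such that `v` is the `t`-axis; then `‖t‖ ≤ C ‖z‖` on the analytic set. It suffices to
find an analytic function that vanishes on the set, has order `d` at the origin, and is at least
`‖t‖ ^ d` in absolute value on the `t`-axis, because its initial part cannot vanish at `v`.

Some `h` vanishing on the set is regular in `t`. If `h (z, ·)` has `m` generic zeros that are
common zeros of the defining functions, the product `∏ (t - a)` over these zeros `a` is `B / δ`,
where `B` and `δ ≢ 0` are analytic because they are symmetric in all the zeros of `h (z, ·)`. As
`‖a‖ ≤ C ‖z‖`, the quotient is bounded and extends to an analytic function `Q` of order `m` by
Riemann's theorem, and `Q` vanishes on the part of the set where `δ ≠ 0`. For the part where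
`δ = 0`, project along a direction outside the tangent cone of `{δ = 0}`. The image is cut out by
analytic functions of fewer variables and satisfies a similar cone condition, so by induction it
has such a function `G`; the product of `Q` and the pull-back of `G` is the required function. -/

section ParametricIntegral

variable {E F G : Type*} [NormedAddCommGroup E] [NormedSpace ℂ E] [NormedAddCommGroup F]
  [NormedSpace ℂ F] [NormedAddCommGroup G] [NormedSpace ℂ G]
  {K : Type*} [TopologicalSpace K] [CompactSpace K]

/-- The power series `p` acting pointwise on continuous functions: the Taylor series, at a constant
function, of the superposition operator `φ ↦ f ∘ φ` of a function `f` with Taylor series `p`. -/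
def pointwiseSeries (K : Type*) [TopologicalSpace K] [CompactSpace K]
    (p : FormalMultilinearSeries ℂ F G) : FormalMultilinearSeries ℂ C(K, F) C(K, G) := fun n =>
  MultilinearMap.mkContinuous
    { toFun := fun φ => ⟨fun x => p n fun i => φ i x, by fun_prop⟩
      map_update_add' := by
        intro _ φ i f g
        ext x
        simp [Function.apply_update (fun _ (ψ : C(K, F)) => ψ x)]
      map_update_smul' := by
        intro _ φ i c f
        ext x
        simp [Function.apply_update (fun _ (ψ : C(K, F)) => ψ x)] }
    ‖p n‖ fun φ => by
      refine (ContinuousMap.norm_le _ (by positivity)).2 fun x => ?_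
      refine ((p n).le_opNorm _).trans ?_
      gcongr with i
      exact (φ i).norm_coe_le_norm x

lemma radius_le_radius_pointwiseSeries (p : FormalMultilinearSeries ℂ F G) :
    p.radius ≤ (pointwiseSeries K p).radius :=
  FormalMultilinearSeries.radius_le_of_le fun _ =>
    MultilinearMap.mkContinuous_norm_le _ (norm_nonneg _) _

lemma sum_pointwiseSeries_apply [CompleteSpace G] {p : FormalMultilinearSeries ℂ F G}
    {φ : C(K, F)} (hφ : φ ∈ Metric.eball 0 p.radius) (x : K) :
    (pointwiseSeries K p).sum φ x = p.sum (φ x) := by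
  have hsum := (pointwiseSeries K p).hasSum
    (Metric.eball_subset_eball (radius_le_radius_pointwiseSeries p) hφ)
  have hx := ContinuousMap.hasSum_apply hsum x
  exact hx.tsum_eq.symm

lemma exists_analyticAt_forall_apply_eq [CompleteSpace G] {f : F → G}
    {p : FormalMultilinearSeries ℂ F G} {y₀ : F} {r : NNReal} (hp : HasFPowerSeriesOnBall f p y₀ r)
    {Φ : E → C(K, F)} {z₀ : E} (hΦ : AnalyticAt ℂ Φ z₀) (hr : ∀ x, Φ z₀ x ∈ Metric.ball y₀ r) :
    ∃ Ψ : E → C(K, G), AnalyticAt ℂ Ψ z₀ ∧ ∀ᶠ z in 𝓝 z₀, ∀ x, Ψ z x = f (Φ z x) := by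
  set Φ' : E → C(K, F) := fun z => Φ z - ContinuousMap.const K y₀
  have hΦ' : AnalyticAt ℂ Φ' z₀ := hΦ.sub analyticAt_const
  have hmem : Φ' z₀ ∈ Metric.eball 0 (r : ENNReal) := by
    rw [Metric.eball_coe, mem_ball_zero_iff, ContinuousMap.norm_lt_iff _ (mod_cast hp.r_pos)]
    intro x
    simpa [Φ', dist_eq_norm] using hr x
  have hrad : (r : ENNReal) ≤ (pointwiseSeries K p).radius :=
    hp.r_le.trans (radius_le_radius_pointwiseSeries p)
  refine ⟨fun z => (pointwiseSeries K p).sum (Φ' z), ?_, ?_⟩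
  · exact (((pointwiseSeries K p).hasFPowerSeriesOnBall (hp.r_pos.trans_le hrad)).analyticAt_of_mem
      (Metric.eball_subset_eball hrad hmem)).comp hΦ'
  · filter_upwards [hΦ'.continuousAt (Metric.isOpen_eball.mem_nhds hmem)] with z hz x
    have hzx : Φ z x - y₀ ∈ Metric.eball 0 (r : ENNReal) := by
      rw [mem_preimage] at hz
      rw [Metric.eball_coe, mem_ball_zero_iff] at hz ⊢
      exact ((Φ' z).norm_coe_le_norm x).trans_lt hz
    calc (pointwiseSeries K p).sum (Φ' z) x = p.sum (Φ z x - y₀) :=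
          sum_pointwiseSeries_apply (Metric.eball_subset_eball hp.r_le hz) x
      _ = f (Φ z x) := by rw [← hp.sum hzx, add_sub_cancel]

/-- Integration over `a..b` as a continuous linear form on `C(Icc c d, G)`, where functions are
extended from `Icc c d` to `ℝ` by constants. -/
def intervalIntegralCLM [CompleteSpace G] {c d : ℝ} (h : c ≤ d) (a b : ℝ) : C(Icc c d, G) →L[ℂ] G :=
  LinearMap.mkContinuous
    { toFun := fun φ => ∫ θ in a..b, φ (projIcc c d h θ)
      map_add' := fun φ ψ => intervalIntegral.integral_add
        (Continuous.intervalIntegrable (by fun_prop) _ _)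
        (Continuous.intervalIntegrable (by fun_prop) _ _)
      map_smul' := fun t φ => intervalIntegral.integral_smul t _ } |b - a| fun φ => by
    rw [mul_comm]
    exact intervalIntegral.norm_integral_le_of_norm_le_const fun θ _ => φ.norm_coe_le_norm _

variable {f : E × F → G} {γ : ℝ → F} {z₀ : E}

lemma eventually_analyticAt_intervalIntegral [CompleteSpace G] (hγ : Continuous γ) {a : ℝ}
    (hf : AnalyticAt ℂ f (z₀, γ a)) :
    ∀ᶠ b in 𝓝 a, AnalyticAt ℂ (fun z => ∫ θ in a..b, f (z, γ θ)) z₀ := by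
  obtain ⟨p, r, hp⟩ := hf
  obtain ⟨r', hr'0, hr'⟩ := ENNReal.lt_iff_exists_nnreal_btwn.1 hp.r_pos
  have hball : ∀ᶠ b in 𝓝 a, γ b ∈ Metric.ball (γ a) r' :=
    hγ.continuousAt (Metric.ball_mem_nhds _ (mod_cast hr'0))
  obtain ⟨δ, hδ, hγδ⟩ := (nhds_basis_Icc_pos a).eventually_iff.1 hball
  have hcd : a - δ ≤ a + δ := by linarith
  let γ' : C(Icc (a - δ) (a + δ), E × F) := ⟨fun θ => (0, γ θ), by fun_prop⟩
  let L : E →L[ℂ] C(Icc (a - δ) (a + δ), E × F) :=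
    (ContinuousLinearMap.const ℂ _).comp (ContinuousLinearMap.inl ℂ E F)
  have hΦ : AnalyticAt ℂ (fun z => L z + γ') z₀ := (L.analyticAt z₀).add analyticAt_const
  obtain ⟨Ψ, hΨ, hΨf⟩ := exists_analyticAt_forall_apply_eq (hp.mono hr'0 hr'.le) hΦ fun θ => by
    simpa [L, γ', Prod.dist_eq, hr'0] using hγδ θ.2
  have hI := Icc_mem_nhds (sub_lt_self a hδ) (lt_add_of_pos_right a hδ)
  filter_upwards [hI] with b hb
  have hab : uIcc a b ⊆ Icc (a - δ) (a + δ) :=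
    ordConnected_Icc.uIcc_subset (mem_of_mem_nhds hI) hb
  refine (((intervalIntegralCLM hcd a b).analyticAt _).comp hΨ).congr ?_
  filter_upwards [hΨf] with z hz
  refine intervalIntegral.integral_congr fun θ hθ => ?_
  simp [hz, projIcc_of_mem hcd (hab hθ), L, γ']

lemma analyticAt_intervalIntegral [CompleteSpace G] (hγ : Continuous γ)
    (hf : ∀ θ, AnalyticAt ℂ f (z₀, γ θ)) (a b : ℝ) :
    AnalyticAt ℂ (fun z => ∫ θ in a..b, f (z, γ θ)) z₀ := by
  have hint : ∀ c d, ∀ᶠ z in 𝓝 z₀,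
      IntervalIntegrable (fun θ => f (z, γ θ)) MeasureTheory.volume c d := by
    intro c d
    have hcont : ∀ᶠ z in 𝓝 z₀, ∀ θ ∈ uIcc c d, ContinuousAt f (z, γ θ) := by
      refine isCompact_uIcc.eventually_forall_of_forall_eventually fun θ _ => ?_
      have hlim : ContinuousAt (fun q : E × ℝ => (q.1, γ q.2)) (z₀, θ) := by fun_prop
      exact hlim.eventually ((hf θ).eventually_analyticAt.mono fun _ h => h.continuousAt)
    filter_upwards [hcont] with z hz
    refine ContinuousOn.intervalIntegrable fun θ hθ => ContinuousAt.continuousWithinAt ?_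
    exact ContinuousAt.comp (g := f) (f := fun θ => (z, γ θ)) (hz θ hθ) (by fun_prop)
  refine isPreconnected_univ.induction₂
    (fun a b => AnalyticAt ℂ (fun z => ∫ θ in a..b, f (z, γ θ)) z₀) ?_ ?_ ?_ (mem_univ a)
    (mem_univ b)
  · intro c _
    simpa using eventually_analyticAt_intervalIntegral hγ (hf c)
  · intro c d e _ _ _ hcd hde
    refine (hcd.add hde).congr ?_
    filter_upwards [hint c d, hint d e] with z h₁ h₂
    exact intervalIntegral.integral_add_adjacent_intervals h₁ h₂
  · intro c d _ _ h
    exact h.neg.congr (.of_forall fun z => (intervalIntegral.integral_symm c d).symm)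

lemma analyticAt_circleIntegral [CompleteSpace G] {f : E × ℂ → G} {c : ℂ} {R : ℝ} (hR : 0 ≤ R)
    (hf : ∀ ζ ∈ Metric.sphere c R, AnalyticAt ℂ f (z₀, ζ)) :
    AnalyticAt ℂ (fun z => ∮ ζ in C(c, R), f (z, ζ)) z₀ := by
  simp only [circleIntegral, deriv_circleMap]
  refine analyticAt_intervalIntegral (f := fun q : E × ℂ => ((q.2 - c) * Complex.I) • f q)
    (γ := circleMap c R) (continuous_circleMap c R) (fun θ => ?_) 0 (2 * Real.pi)
    |>.congr (.of_forall fun z => ?_)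
  · exact ((analyticAt_snd.sub analyticAt_const).mul analyticAt_const).smul
      (hf _ (circleMap_mem_sphere c hR θ))
  · simp [circleMap]

end ParametricIntegral

section OneVariable

variable {g : ℂ → ℂ} {K : Set ℂ}

lemma exists_eq_pow_mul_of_not_eventually_eq_zero (hg : AnalyticOnNhd ℂ g K) {a : ℂ} (ha : a ∈ K)
    (hga : ¬ ∀ᶠ x in 𝓝 a, g x = 0) :
    ∃ (n : ℕ) (g₁ : ℂ → ℂ), AnalyticOnNhd ℂ g₁ K ∧ g₁ a ≠ 0 ∧ ∀ x, g x = (x - a) ^ n * g₁ x := by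
  obtain ⟨n, φ, hφ, hφa, hgφ⟩ := (hg a ha).exists_eventuallyEq_pow_smul_nonzero_iff.2 hga
  refine ⟨n, Function.update (fun x => g x / (x - a) ^ n) a (φ a), fun x hx => ?_, by simpa,
    fun x => ?_⟩
  · rcases eq_or_ne x a with rfl | hxa
    · refine hφ.congr ?_
      filter_upwards [hgφ] with y hy
      rcases eq_or_ne y x with rfl | hyx
      · simp
      · rw [Function.update_of_ne hyx, hy, smul_eq_mul,
          mul_div_cancel_left₀ _ (pow_ne_zero n (sub_ne_zero.2 hyx))]
    · have hquot : AnalyticAt ℂ (fun y => g y / (y - a) ^ n) x :=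
        (hg x hx).div ((analyticAt_id.sub analyticAt_const).pow n)
          (pow_ne_zero n (sub_ne_zero.2 hxa))
      exact hquot.congr ((eventually_ne_nhds hxa).mono fun y hy => by simp [hy])
  · rcases eq_or_ne x a with rfl | hxa
    · simpa using hgφ.self_of_nhds
    · rw [Function.update_of_ne hxa, mul_div_cancel₀ _ (pow_ne_zero n (sub_ne_zero.2 hxa))]

lemma finite_zeros_of_isCompact (hK : IsCompact K) (hg : AnalyticOnNhd ℂ g K)
    (hg0 : ∀ a ∈ K, ¬ ∀ᶠ x in 𝓝 a, g x = 0) : (K ∩ {x | g x = 0}).Finite := by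
  refine hK.induction_on (p := fun s => (s ∩ {x | g x = 0}).Finite) (by simp)
    (fun s t hst ht => ht.subset (inter_subset_inter_left _ hst))
    (fun s t hs ht => by rw [union_inter_distrib_right]; exact hs.union ht) fun a ha => ?_
  have hne : ∀ᶠ x in 𝓝[≠] a, g x ≠ 0 :=
    (hg a ha).eventually_eq_zero_or_eventually_ne_zero.resolve_left (hg0 a ha)
  refine ⟨_, mem_nhdsWithin_of_mem_nhds (eventually_nhdsWithin_iff.1 hne), ?_⟩
  exact (finite_singleton a).subset fun x hx => by_contra fun hxa => hx.1 hxa hx.2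

lemma exists_multiset_prod_mul (hK : IsCompact K) (hg : AnalyticOnNhd ℂ g K)
    (hg0 : ∀ a ∈ K, ¬ ∀ᶠ x in 𝓝 a, g x = 0) :
    ∃ (s : Multiset ℂ) (u : ℂ → ℂ), (∀ a ∈ s, a ∈ K) ∧ AnalyticOnNhd ℂ u K ∧ (∀ x ∈ K, u x ≠ 0) ∧
      ∀ x, g x = (s.map (x - ·)).prod * u x := by
  suffices h : ∀ (Z : Finset ℂ) (g : ℂ → ℂ), AnalyticOnNhd ℂ g K →
      (∀ a ∈ K, ¬ ∀ᶠ x in 𝓝 a, g x = 0) → (∀ a ∈ K, g a = 0 → a ∈ Z) →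
      ∃ (s : Multiset ℂ) (u : ℂ → ℂ), (∀ a ∈ s, a ∈ K) ∧ AnalyticOnNhd ℂ u K ∧
        (∀ x ∈ K, u x ≠ 0) ∧ ∀ x, g x = (s.map (x - ·)).prod * u x from
    h (finite_zeros_of_isCompact hK hg hg0).toFinset g hg hg0 fun a ha hga => by simp [ha, hga]
  intro Z
  induction Z using Finset.induction_on with
  | empty =>
    exact fun g hg _ hZ =>
      ⟨0, g, by simp, hg, fun x hx hgx => by simpa using hZ x hx hgx, by simp⟩
  | insert a Z _ ih =>
    intro g hg hg0 hZ
    by_cases ha : a ∈ K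
    · obtain ⟨n, g₁, hg₁, hg₁a, hgg₁⟩ :=
        exists_eq_pow_mul_of_not_eventually_eq_zero hg ha (hg0 a ha)
      obtain ⟨s, u, hs, hu, hu0, hg₁u⟩ := ih g₁ hg₁
        (fun b hb h => hg0 b hb (h.mono fun x hx => by rw [hgg₁, hx, mul_zero]))
        (fun b hb hb0 => (Finset.mem_insert.1 (hZ b hb (by rw [hgg₁, hb0, mul_zero]))).resolve_left
          fun hba => hg₁a (hba ▸ hb0))
      refine ⟨Multiset.replicate n a + s, u, fun b hb => ?_, hu, hu0, fun x => ?_⟩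
      · rcases Multiset.mem_add.1 hb with hb | hb
        · exact Multiset.eq_of_mem_replicate hb ▸ ha
        · exact hs b hb
      · simp [hgg₁, hg₁u, mul_assoc]
    · exact ih g hg hg0 fun b hb hb0 => (Finset.mem_insert.1 (hZ b hb hb0)).resolve_left
        fun hba => ha (hba ▸ hb)

lemma differentiableAt_multiset_prod_sub (s : Multiset ℂ) (t : ℂ) :
    DifferentiableAt ℂ (fun x => (s.map (x - ·)).prod) t := by
  induction s using Multiset.induction_on with
  | empty => simp
  | cons a s ih => simpa using (differentiableAt_id.sub_const a).fun_mul ih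

lemma logDeriv_multiset_prod_sub {s : Multiset ℂ} {t : ℂ} (ht : t ∉ s) :
    logDeriv (fun x => (s.map (x - ·)).prod) t = (s.map fun a => (t - a)⁻¹).sum := by
  induction s using Multiset.induction_on with
  | empty => simp
  | cons a s ih =>
    simp only [Multiset.mem_cons, not_or] at ht
    have hs : (s.map (t - ·)).prod ≠ 0 := by
      simpa [Multiset.prod_eq_zero_iff, sub_eq_zero] using ht.2
    simp only [Multiset.map_cons, Multiset.prod_cons, Multiset.sum_cons]
    rw [logDeriv_mul (f := fun x => x - a) t (sub_ne_zero.2 ht.1) hs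
      (differentiableAt_id.sub_const a) (differentiableAt_multiset_prod_sub s t), ih ht.2]
    simp [logDeriv_apply]

lemma circleIntegrable_and_circleIntegral_sum_sub_inv_mul {G : ℂ → ℂ} {c : ℂ} {ρ : ℝ} (hρ : 0 ≤ ρ)
    (hG : AnalyticOnNhd ℂ G (Metric.closedBall c ρ)) {s : Multiset ℂ}
    (hs : ∀ a ∈ s, a ∈ Metric.ball c ρ) :
    CircleIntegrable (fun t => (s.map fun a => (t - a)⁻¹ * G t).sum) c ρ ∧
      (∮ t in C(c, ρ), (s.map fun a => (t - a)⁻¹ * G t).sum) =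
        2 * Real.pi * Complex.I * (s.map G).sum := by
  induction s using Multiset.induction_on with
  | empty => simp [circleIntegrable_const, circleIntegral]
  | cons a s ih =>
    obtain ⟨hint, hval⟩ := ih fun b hb => hs b (Multiset.mem_cons_of_mem hb)
    have ha := hs a (Multiset.mem_cons_self a s)
    have hinta : CircleIntegrable (fun t => (t - a)⁻¹ * G t) c ρ := by
      refine ContinuousOn.circleIntegrable hρ (ContinuousOn.mul (ContinuousOn.inv₀ (by fun_prop) ?_)
        (hG.continuousOn.mono Metric.sphere_subset_closedBall))
      exact fun t ht hta => (Metric.mem_ball.1 ha).ne (sub_eq_zero.1 hta ▸ ht)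
    have hcauchy := hG.differentiableOn.circleIntegral_sub_inv_smul ha
    simp only [smul_eq_mul] at hcauchy
    simp only [Multiset.map_cons, Multiset.sum_cons]
    refine ⟨hinta.add hint, ?_⟩
    rw [circleIntegral.integral_add hinta hint, hval, hcauchy]
    ring

lemma circleIntegral_mul_logDeriv {G u : ℂ → ℂ} {c : ℂ} {ρ : ℝ} (hρ : 0 ≤ ρ)
    (hG : AnalyticOnNhd ℂ G (Metric.closedBall c ρ))
    (hu : AnalyticOnNhd ℂ u (Metric.closedBall c ρ))
    (hu0 : ∀ t ∈ Metric.closedBall c ρ, u t ≠ 0) {s : Multiset ℂ}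
    (hs : ∀ a ∈ s, a ∈ Metric.ball c ρ) (hg : ∀ x, g x = (s.map (x - ·)).prod * u x) :
    (∮ t in C(c, ρ), G t * logDeriv g t) = 2 * Real.pi * Complex.I * (s.map G).sum := by
  have hsub : Metric.sphere c ρ ⊆ Metric.closedBall c ρ := Metric.sphere_subset_closedBall
  have hlog : ∀ t ∈ Metric.sphere c ρ, G t * logDeriv g t =
      (s.map fun a => (t - a)⁻¹ * G t).sum + G t * logDeriv u t := by
    intro t ht
    have hts : t ∉ s := fun h => (Metric.mem_ball.1 (hs t h)).ne ht
    have hprod : (s.map (t - ·)).prod ≠ 0 := by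
      simpa [Multiset.prod_eq_zero_iff, sub_eq_zero] using hts
    rw [funext hg, logDeriv_mul (f := fun x => (s.map (x - ·)).prod) t hprod (hu0 t (hsub ht))
      (differentiableAt_multiset_prod_sub s t) (hu t (hsub ht)).differentiableAt,
      logDeriv_multiset_prod_sub hts, mul_add, Multiset.sum_map_mul_right, mul_comm (G t)]
  have hreg : AnalyticOnNhd ℂ (fun t => G t * logDeriv u t) (Metric.closedBall c ρ) :=
    fun t ht => (hG t ht).mul ((hu t ht).deriv.div (hu t ht) (hu0 t ht))
  obtain ⟨hint, hval⟩ := circleIntegrable_and_circleIntegral_sum_sub_inv_mul hρ hG hs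
  rw [circleIntegral.integral_congr hρ hlog, circleIntegral.integral_add hint
    ((hreg.continuousOn.mono hsub).circleIntegrable hρ), hval,
    Complex.circleIntegral_eq_zero_of_differentiable_on_off_countable hρ countable_empty
      hreg.continuousOn fun z hz => (hreg z (Metric.ball_subset_closedBall hz.1)).differentiableAt,
    add_zero]

lemma exists_analyticOnNhd_eq_mul_of_norm_le {b δ : ℂ → ℂ} {U : Set ℂ} {C : ℝ}
    (hb : AnalyticOnNhd ℂ b U) (hδ : AnalyticOnNhd ℂ δ U) (hδ0 : ∀ x ∈ U, ¬ ∀ᶠ y in 𝓝 x, δ y = 0)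
    (hC : ∀ x ∈ U, ∀ᶠ y in 𝓝 x, ‖b y‖ ≤ C * ‖δ y‖) :
    ∃ q : ℂ → ℂ, AnalyticOnNhd ℂ q U ∧ ∀ x ∈ U, b x = q x * δ x := by
  set q : ℂ → ℂ := fun x => limUnder (𝓝[≠] x) fun y => b y / δ y
  suffices hq : ∀ x ∈ U, AnalyticAt ℂ q x ∧ b x = q x * δ x from
    ⟨q, fun x hx => (hq x hx).1, fun x hx => (hq x hx).2⟩
  intro x hx
  have hne : ∀ᶠ y in 𝓝[≠] x, δ y ≠ 0 :=
    (hδ x hx).eventually_eq_zero_or_eventually_ne_zero.resolve_left (hδ0 x hx)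
  have hquot : ∀ᶠ y in 𝓝[≠] x, AnalyticAt ℂ (fun y => b y / δ y) y := by
    filter_upwards [hne, (hb x hx).eventually_analyticAt.filter_mono nhdsWithin_le_nhds,
      (hδ x hx).eventually_analyticAt.filter_mono nhdsWithin_le_nhds] with y h₁ h₂ h₃
    exact h₂.div h₃ h₁
  have hqeq : ∀ᶠ y in 𝓝[≠] x, q y = b y / δ y := hquot.mono fun y hy =>
    (hy.continuousAt.tendsto.mono_left nhdsWithin_le_nhds).limUnder_eq
  have hlim : Tendsto (fun y => b y / δ y) (𝓝[≠] x) (𝓝 (q x)) := by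
    refine Complex.tendsto_limUnder_of_differentiable_on_punctured_nhds_of_bounded_under
      (hquot.mono fun y hy => hy.differentiableAt)
      (isBoundedUnder_of_eventually_le (a := C + ‖b x / δ x‖) ?_)
    filter_upwards [hne, (hC x hx).filter_mono nhdsWithin_le_nhds] with y hy hyC
    refine (norm_sub_le _ _).trans (add_le_add_left ?_ _)
    rwa [norm_div, div_le_iff₀ (norm_pos_iff.2 hy)]
  have hqan : AnalyticAt ℂ q x := by
    refine Complex.analyticAt_of_differentiable_on_punctured_nhds_of_continuousAt ?_
      (continuousAt_iff_punctured_nhds.2 (hlim.congr' (hqeq.mono fun _ h => h.symm)))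
    filter_upwards [hquot, eventually_eventually_nhdsWithin.2 hqeq, self_mem_nhdsWithin]
      with y hy hyq hyx
    rw [isOpen_compl_singleton.nhdsWithin_eq hyx] at hyq
    exact hy.differentiableAt.congr_of_eventuallyEq hyq
  have hbq : ∀ᶠ y in 𝓝[≠] x, b y = q y * δ y := by
    filter_upwards [hne, hqeq] with y hy hyq
    rw [hyq, div_mul_cancel₀ _ hy]
  exact ⟨hqan, (((hb x hx).frequently_eq_iff_eventually_eq (hqan.mul (hδ x hx))).1
    hbq.frequently).self_of_nhds⟩

end OneVariable

section Roots

lemma not_eventually_eq_zero_of_isPreconnected {F : Type*} [NormedAddCommGroup F] [NormedSpace ℂ F]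
    {g : F → ℂ} {K : Set F} (hg : AnalyticOnNhd ℂ g K) (hK : IsPreconnected K) {b : F} (hb : b ∈ K)
    (hgb : g b ≠ 0) {a : F} (ha : a ∈ K) : ¬ ∀ᶠ x in 𝓝 a, g x = 0 := fun h =>
  hgb (hg.eqOn_zero_of_preconnected_of_eventuallyEq_zero hK ha h hb)

lemma exists_roots_of_ne_zero_on_sphere {g : ℂ → ℂ} {c : ℂ} {ρ : ℝ} (hρ : 0 ≤ ρ)
    (hg : AnalyticOnNhd ℂ g (Metric.closedBall c ρ)) (hgρ : ∀ t ∈ Metric.sphere c ρ, g t ≠ 0) :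
    ∃ s : Multiset ℂ, (∀ t, t ∈ s ↔ t ∈ Metric.ball c ρ ∧ g t = 0) ∧
      ∀ G : ℂ → ℂ, AnalyticOnNhd ℂ G (Metric.closedBall c ρ) →
        (∮ t in C(c, ρ), G t * logDeriv g t) = 2 * Real.pi * Complex.I * (s.map G).sum := by
  have hb : circleMap c ρ 0 ∈ Metric.sphere c ρ := circleMap_mem_sphere c hρ 0
  obtain ⟨s, u, hs, hu, hu0, hgu⟩ := exists_multiset_prod_mul (isCompact_closedBall c ρ) hg
    fun a ha => not_eventually_eq_zero_of_isPreconnected hg (convex_closedBall c ρ).isPreconnected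
      (Metric.sphere_subset_closedBall hb) (hgρ _ hb) ha
  have hgs : ∀ t ∈ Metric.closedBall c ρ, t ∈ s ↔ g t = 0 := fun t ht => by
    simp [hgu, hu0 t ht, Multiset.prod_eq_zero_iff, sub_eq_zero]
  have hsball : ∀ t ∈ s, t ∈ Metric.ball c ρ := fun t ht =>
    (Metric.mem_closedBall.1 (hs t ht)).lt_of_ne fun h => hgρ t h ((hgs t (hs t ht)).1 ht)
  refine ⟨s, fun t => ⟨fun ht => ⟨hsball t ht, (hgs t (hs t ht)).1 ht⟩, fun ht =>
    (hgs t (Metric.ball_subset_closedBall ht.1)).2 ht.2⟩, fun G hG => ?_⟩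
  exact circleIntegral_mul_logDeriv hρ hG hu hu0 hsball hgu

lemma natCast_mul_multiset_esymm (s : Multiset ℂ) (j : ℕ) :
    (j : ℂ) * s.esymm j = (-1) ^ (j + 1) *
      ∑ a ∈ Finset.HasAntidiagonal.antidiagonal j with a.1 < j,
        (-1) ^ a.1 * s.esymm a.1 * (s.map (· ^ a.2)).sum := by
  classical
  have hpsum : ∀ n, MvPolynomial.aeval (fun x : s => (x : ℂ)) (MvPolynomial.psum s ℂ n) =
      (s.map (· ^ n)).sum := fun n => by
    simp only [MvPolynomial.psum, map_sum, map_pow, MvPolynomial.aeval_X]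
    conv_rhs => rw [← Multiset.map_univ_coe s, Multiset.map_map]
    rfl
  have h := congrArg (MvPolynomial.aeval fun x : s => (x : ℂ)) (MvPolynomial.mul_esymm_eq_sum s ℂ j)
  simpa only [map_mul, map_natCast, map_pow, map_neg, map_one, map_sum, hpsum,
    MvPolynomial.aeval_esymm_eq_multiset_esymm, Multiset.map_univ_coe] using h

variable {E : Type*} [NormedAddCommGroup E] [NormedSpace ℂ E]

lemma analyticOnNhd_esymm_of_sum_pow {σ : E → Multiset ℂ} {B : Set E}
    (hσ : ∀ n, AnalyticOnNhd ℂ (fun z => ((σ z).map (· ^ n)).sum) B) (j : ℕ) :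
    AnalyticOnNhd ℂ (fun z => (σ z).esymm j) B := by
  induction j using Nat.strong_induction_on with
  | _ j ih =>
    rcases Nat.eq_zero_or_pos j with rfl | hj
    · simpa [Multiset.esymm] using analyticOnNhd_const
    · have hnewton : (fun z => (σ z).esymm j) = fun z => (j : ℂ)⁻¹ * ((-1) ^ (j + 1) *
          ∑ a ∈ Finset.HasAntidiagonal.antidiagonal j with a.1 < j,
            (-1) ^ a.1 * (σ z).esymm a.1 * ((σ z).map (· ^ a.2)).sum) := by
        funext z
        rw [← natCast_mul_multiset_esymm, inv_mul_cancel_left₀ (mod_cast hj.ne')]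
      rw [hnewton]
      intro z hz
      refine analyticAt_const.mul (analyticAt_const.mul
        (Finset.analyticAt_fun_sum _ fun a ha => ?_))
      exact (analyticAt_const.mul (ih a.1 (Finset.mem_filter.1 ha).2 z hz)).mul (hσ a.2 z hz)

lemma deriv_prodMk_right {h : E × ℂ → ℂ} {z : E} {t : ℂ} (hh : DifferentiableAt ℂ h (z, t)) :
    deriv (fun x => h (z, x)) t = fderiv ℂ h (z, t) (0, 1) :=
  (hh.hasFDerivAt.comp_hasDerivAt t ((hasDerivAt_const t z).prodMk (hasDerivAt_id t))).deriv

lemma analyticAt_prodMk_right {h : E × ℂ → ℂ} {z : E} {t : ℂ} (hh : AnalyticAt ℂ h (z, t)) :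
    AnalyticAt ℂ (fun x => h (z, x)) t :=
  hh.comp_of_eq (analyticAt_const.prod analyticAt_id) rfl

lemma exists_polydisc_ne_zero {U : Set (E × ℂ)} (hU : U ∈ 𝓝 0) {h : E × ℂ → ℂ}
    (hh : AnalyticOnNhd ℂ h U) (h0 : ¬ ∀ᶠ t in 𝓝 (0 : ℂ), h (0, t) = 0) :
    ∃ ρ > 0, ∃ ε > 0, Metric.ball 0 ε ×ˢ Metric.closedBall 0 ρ ⊆ U ∧
      ∀ z ∈ Metric.ball (0 : E) ε, ∀ t ∈ Metric.sphere (0 : ℂ) ρ, h (z, t) ≠ 0 := by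
  have hslice : AnalyticAt ℂ (fun t => h (0, t)) 0 :=
    analyticAt_prodMk_right (hh 0 (mem_of_mem_nhds hU))
  have hne : ∀ᶠ t in 𝓝[≠] (0 : ℂ), h (0, t) ≠ 0 :=
    hslice.eventually_eq_zero_or_eventually_ne_zero.resolve_left h0
  obtain ⟨r₁, hr₁, hr₁h⟩ := Metric.eventually_nhds_iff_ball.1 (eventually_nhdsWithin_iff.1 hne)
  obtain ⟨r₂, hr₂, hr₂U⟩ := Metric.mem_nhds_iff.1 hU
  obtain ⟨ρ, hρ, hρmin⟩ := exists_between (lt_min hr₁ hr₂)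
  obtain ⟨hρr₁, hρr₂⟩ := lt_min_iff.1 hρmin
  have hsub : Metric.ball 0 r₂ ×ˢ Metric.closedBall 0 ρ ⊆ U := by
    refine (prod_mono_right (Metric.closedBall_subset_ball hρr₂)).trans (subset_trans ?_ hr₂U)
    rw [ball_prod_same, Prod.mk_zero_zero]
  have hsphere : ∀ᶠ z in 𝓝 (0 : E), ∀ t ∈ Metric.sphere (0 : ℂ) ρ, h (z, t) ≠ 0 := by
    refine (isCompact_sphere 0 ρ).eventually_forall_of_forall_eventually fun t ht => ?_
    have htρ : ‖t‖ = ρ := by simpa using ht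
    refine (hh (0, t) (hsub ⟨Metric.mem_ball_self hr₂, ?_⟩)).continuousAt.eventually_ne
      (hr₁h t (by simpa [htρ]) (norm_pos_iff.1 (htρ ▸ hρ)))
    exact Metric.sphere_subset_closedBall ht
  obtain ⟨r₃, hr₃, hr₃h⟩ := Metric.eventually_nhds_iff_ball.1 hsphere
  exact ⟨ρ, hρ, min r₂ r₃, lt_min hr₂ hr₃,
    (prod_mono_left (Metric.ball_subset_ball (min_le_left _ _))).trans hsub,
    fun z hz => hr₃h z (Metric.ball_subset_ball (min_le_right _ _) hz)⟩

/-- `σ z` is the multiset of the zeros `t` of `h (z, ·)` in the disc `‖t‖ < ρ`, for `z` in the ball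
of radius `ε`, and the polydisc of radii `ε` and `ρ` is contained in `U`. The number of zeros does
not depend on `z`, and the symmetric functions of the values of analytic functions at the zeros are
analytic. -/
structure IsRootFamily (h : E × ℂ → ℂ) (U : Set (E × ℂ)) (ε ρ : ℝ) (k : ℕ) (σ : E → Multiset ℂ) :
    Prop where
  subset : Metric.ball (0 : E) ε ×ˢ Metric.closedBall (0 : ℂ) ρ ⊆ U
  card_eq : ∀ z ∈ Metric.ball (0 : E) ε, (σ z).card = k
  mem_iff : ∀ z ∈ Metric.ball (0 : E) ε, ∀ t, t ∈ σ z ↔ ‖t‖ < ρ ∧ h (z, t) = 0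
  analyticOnNhd_esymm : ∀ g : E × ℂ → ℂ, AnalyticOnNhd ℂ g U → ∀ j,
    AnalyticOnNhd ℂ (fun z => ((σ z).map fun t => g (z, t)).esymm j) (Metric.ball (0 : E) ε)

lemma analyticOnNhd_sum_of_circleIntegral {U : Set (E × ℂ)} {h g : E × ℂ → ℂ}
    (hh : AnalyticOnNhd ℂ h U) (hg : AnalyticOnNhd ℂ g U) {B : Set E} (hB : IsOpen B) {ρ : ℝ}
    (hρ : 0 ≤ ρ) (hBU : B ×ˢ Metric.closedBall 0 ρ ⊆ U)
    (hne : ∀ z ∈ B, ∀ t ∈ Metric.sphere (0 : ℂ) ρ, h (z, t) ≠ 0) {N : E → ℂ}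
    (hN : ∀ z ∈ B, (∮ t in C(0, ρ), g (z, t) * logDeriv (fun x => h (z, x)) t) =
      2 * Real.pi * Complex.I * N z) :
    AnalyticOnNhd ℂ N B := by
  have hU : ∀ z ∈ B, ∀ t ∈ Metric.sphere (0 : ℂ) ρ, (z, t) ∈ U := fun z hz t ht =>
    hBU ⟨hz, Metric.sphere_subset_closedBall ht⟩
  intro z₀ hz₀
  have hint : AnalyticAt ℂ (fun z => (2 * Real.pi * Complex.I)⁻¹ *
      ∮ t in C(0, ρ), g (z, t) * (fderiv ℂ h (z, t) (0, 1) / h (z, t))) z₀ := by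
    refine analyticAt_const.mul (analyticAt_circleIntegral
      (f := fun p => g p * (fderiv ℂ h p (0, 1) / h p)) hρ fun t ht => ?_)
    have hmem := hU z₀ hz₀ t ht
    have hderiv : AnalyticAt ℂ (fun p => fderiv ℂ h p (0, 1)) (z₀, t) :=
      ((ContinuousLinearMap.apply ℂ ℂ ((0 : E), (1 : ℂ))).analyticAt _).comp (hh _ hmem).fderiv
    exact (hg _ hmem).mul (hderiv.div (hh _ hmem) (hne z₀ hz₀ t ht))
  refine hint.congr ?_
  filter_upwards [hB.mem_nhds hz₀] with z hz
  rw [inv_mul_eq_iff_eq_mul₀ (by simp [Real.pi_ne_zero]), ← hN z hz]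
  refine circleIntegral.integral_congr hρ fun t ht => ?_
  simp only [logDeriv_apply]
  rw [deriv_prodMk_right (hh _ (hU z hz t ht)).differentiableAt]

lemma exists_isRootFamily {U : Set (E × ℂ)} (hU : U ∈ 𝓝 0) {h : E × ℂ → ℂ}
    (hh : AnalyticOnNhd ℂ h U) (h0 : ¬ ∀ᶠ t in 𝓝 (0 : ℂ), h (0, t) = 0) :
    ∃ ρ > 0, ∃ ε > 0, ∃ k σ, IsRootFamily h U ε ρ k σ := by
  obtain ⟨ρ, hρ, ε, hε, hsub, hne⟩ := exists_polydisc_ne_zero hU hh h0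
  have hslice : ∀ g, AnalyticOnNhd ℂ g U → ∀ z ∈ Metric.ball (0 : E) ε,
      AnalyticOnNhd ℂ (fun t => g (z, t)) (Metric.closedBall 0 ρ) := fun g hg z hz t ht =>
    analyticAt_prodMk_right (hg _ (hsub ⟨hz, ht⟩))
  choose! σ hσ using fun z hz =>
    exists_roots_of_ne_zero_on_sphere hρ.le (hslice h hh z hz) (hne z hz)
  have hsum : ∀ g, AnalyticOnNhd ℂ g U →
      AnalyticOnNhd ℂ (fun z => ((σ z).map fun t => g (z, t)).sum) (Metric.ball 0 ε) := fun g hg =>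
    analyticOnNhd_sum_of_circleIntegral hh hg Metric.isOpen_ball hρ.le hsub hne fun z hz =>
      (hσ z hz).2 _ (hslice g hg z hz)
  have hcard : ∀ᶠ z in 𝓝 (0 : E), (σ z).card = (σ 0).card := by
    have hcont : ContinuousAt (fun z => ((σ z).card : ℂ)) 0 := by
      simpa using (hsum (fun _ => 1) analyticOnNhd_const 0 (Metric.mem_ball_self hε)).continuousAt
    have hnat : ContinuousAt (fun z => (σ z).card) 0 := by
      refine Nat.isClosedEmbedding_coe_real.isInducing.continuousAt_iff.2 ?_
      simpa [Function.comp_def] using Complex.continuous_re.continuousAt.comp hcont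
    exact hnat (mem_nhds_discrete.2 (mem_singleton _))
  obtain ⟨ε', hε', hcard'⟩ := Metric.eventually_nhds_iff_ball.1 hcard
  have hball : Metric.ball (0 : E) (min ε ε') ⊆ Metric.ball 0 ε :=
    Metric.ball_subset_ball (min_le_left _ _)
  refine ⟨ρ, hρ, min ε ε', lt_min hε hε', (σ 0).card, σ, (prod_mono_left hball).trans hsub,
    fun z hz => hcard' z (Metric.ball_subset_ball (min_le_right _ _) hz),
    fun z hz t => by simpa using (hσ z (hball hz)).1 t, fun g hg => ?_⟩
  refine analyticOnNhd_esymm_of_sum_pow fun n => ?_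
  simpa [Multiset.map_map] using (hsum _ (hg.pow n)).mono hball

end Roots

section SeveralVariables

variable {E : Type*} [NormedAddCommGroup E] [NormedSpace ℂ E] {b δ : E → ℂ}

lemma exists_not_eventually_smul_eq_zero (hδ : AnalyticAt ℂ δ 0)
    (hδ0 : ¬ ∀ᶠ z in 𝓝 0, δ z = 0) : ∃ w, ¬ ∀ᶠ t in 𝓝 (0 : ℂ), δ (t • w) = 0 := by
  obtain ⟨r, hr, hδr⟩ := Metric.eventually_nhds_iff_ball.1 hδ.eventually_analyticAt
  obtain ⟨w, hw0, hw⟩ := ((not_eventually.1 hδ0).and_eventually (Metric.ball_mem_nhds 0 hr)).exists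
  have hline : AnalyticOnNhd ℂ (fun t : ℂ => δ (t • w)) (Metric.closedBall 0 1) := by
    refine fun t ht => AnalyticAt.comp (hδr _ ?_) (analyticAt_id.smul analyticAt_const)
    rw [dist_zero_right] at hw
    rw [mem_closedBall_zero_iff] at ht
    rw [mem_ball_zero_iff]
    calc ‖t • w‖ = ‖t‖ * ‖w‖ := norm_smul _ _
      _ ≤ ‖w‖ := mul_le_of_le_one_left (norm_nonneg _) ht
      _ < r := hw
  exact ⟨w, not_eventually_eq_zero_of_isPreconnected hline
    (convex_closedBall 0 1).isPreconnected (b := 1) (by simp) (by simpa using hw0) (by simp)⟩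

lemma eventually_frequently_ne_zero {x : E} (hδ : AnalyticAt ℂ δ x)
    (hδ0 : ¬ ∀ᶠ z in 𝓝 x, δ z = 0) : ∀ᶠ z in 𝓝 x, ∃ᶠ z' in 𝓝 z, δ z' ≠ 0 := by
  obtain ⟨r, hr, hδr⟩ := Metric.eventually_nhds_iff_ball.1 hδ.eventually_analyticAt
  obtain ⟨w, hw0, hw⟩ := ((not_eventually.1 hδ0).and_eventually (Metric.ball_mem_nhds x hr)).exists
  filter_upwards [Metric.ball_mem_nhds x hr] with z hz
  exact not_eventually.1 (not_eventually_eq_zero_of_isPreconnected hδr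
    (convex_ball x r).isPreconnected hw hw0 hz)

lemma eq_circleIntegral_div_mul_of_norm_le {b δ : ℂ → ℂ} {ρ C : ℝ} (hρ : 0 < ρ)
    (hb : AnalyticOnNhd ℂ b (Metric.closedBall 0 ρ))
    (hδ : AnalyticOnNhd ℂ δ (Metric.closedBall 0 ρ)) (hδ0 : ∀ t ∈ Metric.sphere 0 ρ, δ t ≠ 0)
    (hC : ∀ x ∈ Metric.closedBall 0 ρ, ∀ᶠ y in 𝓝 x, ‖b y‖ ≤ C * ‖δ y‖) :
    b 0 = ((2 * Real.pi * Complex.I)⁻¹ * ∮ ζ in C(0, ρ), ζ⁻¹ * (b ζ / δ ζ)) * δ 0 := by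
  have hs : circleMap 0 ρ 0 ∈ Metric.sphere (0 : ℂ) ρ := circleMap_mem_sphere 0 hρ.le 0
  obtain ⟨q, hq, hbq⟩ := exists_analyticOnNhd_eq_mul_of_norm_le hb hδ
    (fun x hx => not_eventually_eq_zero_of_isPreconnected hδ (convex_closedBall 0 ρ).isPreconnected
      (Metric.sphere_subset_closedBall hs) (hδ0 _ hs) hx) hC
  have hcauchy : (∮ ζ in C(0, ρ), (ζ - 0)⁻¹ • q ζ) = (2 * Real.pi * Complex.I) • q 0 :=
    hq.differentiableOn.circleIntegral_sub_inv_smul (Metric.mem_ball_self hρ)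
  have hquot : (∮ ζ in C(0, ρ), ζ⁻¹ * (b ζ / δ ζ)) = ∮ ζ in C(0, ρ), (ζ - 0)⁻¹ • q ζ := by
    refine circleIntegral.integral_congr hρ.le fun ζ hζ => ?_
    simp only [sub_zero, smul_eq_mul]
    rw [hbq ζ (Metric.sphere_subset_closedBall hζ), mul_div_cancel_right₀ _ (hδ0 ζ hζ)]
  rw [hquot, hcauchy, smul_eq_mul, inv_mul_cancel_left₀ (by simp [Real.pi_ne_zero]),
    hbq 0 (Metric.mem_closedBall_self hρ.le)]

lemma analyticAt_add_smul {f : E → ℂ} {w : E} {q : E × ℂ}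
    (hf : AnalyticAt ℂ f (q.1 + q.2 • w)) :
    AnalyticAt ℂ (fun q : E × ℂ => f (q.1 + q.2 • w)) q :=
  hf.comp (f := fun q : E × ℂ => q.1 + q.2 • w)
    (analyticAt_fst.add (analyticAt_snd.smul analyticAt_const))

-- The quotient is a Cauchy integral in a direction `w` along which `δ` does not vanish identically.
lemma exists_analyticAt_eq_mul_of_norm_le {C : ℝ} (hb : AnalyticAt ℂ b 0)
    (hδ : AnalyticAt ℂ δ 0) (hδ0 : ¬ ∀ᶠ z in 𝓝 0, δ z = 0)
    (hC : ∀ᶠ z in 𝓝 0, ‖b z‖ ≤ C * ‖δ z‖) :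
    ∃ a : E → ℂ, AnalyticAt ℂ a 0 ∧ ∀ᶠ z in 𝓝 0, b z = a z * δ z := by
  obtain ⟨w, hw⟩ := exists_not_eventually_smul_eq_zero hδ hδ0
  have hadd : Tendsto (fun q : E × ℂ => q.1 + q.2 • w) (𝓝 0) (𝓝 0) := by
    have hcont : Continuous fun q : E × ℂ => q.1 + q.2 • w := by fun_prop
    simpa using hcont.tendsto 0
  set U : Set (E × ℂ) := {q | AnalyticAt ℂ b (q.1 + q.2 • w) ∧ AnalyticAt ℂ δ (q.1 + q.2 • w) ∧
    ∀ᶠ y in 𝓝 (q.1 + q.2 • w), ‖b y‖ ≤ C * ‖δ y‖}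
  have hU : U ∈ 𝓝 0 := hadd.eventually
    (hb.eventually_analyticAt.and (hδ.eventually_analyticAt.and hC.eventually_nhds))
  have hbU : AnalyticOnNhd ℂ (fun q : E × ℂ => b (q.1 + q.2 • w)) U :=
    fun _ hq => analyticAt_add_smul hq.1
  have hδU : AnalyticOnNhd ℂ (fun q : E × ℂ => δ (q.1 + q.2 • w)) U :=
    fun _ hq => analyticAt_add_smul hq.2.1
  obtain ⟨ρ, hρ, ε, hε, hsub, hne⟩ := exists_polydisc_ne_zero hU hδU (by simpa using hw)
  refine ⟨fun z => (2 * Real.pi * Complex.I)⁻¹ *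
    ∮ ζ in C(0, ρ), ζ⁻¹ * (b (z + ζ • w) / δ (z + ζ • w)), ?_, ?_⟩
  · refine analyticAt_const.mul (analyticAt_circleIntegral
      (f := fun q : E × ℂ => q.2⁻¹ * (b (q.1 + q.2 • w) / δ (q.1 + q.2 • w))) hρ.le fun ζ hζ => ?_)
    have h0 : (0 : E) ∈ Metric.ball 0 ε := Metric.mem_ball_self hε
    have hmem := hsub (mk_mem_prod h0 (Metric.sphere_subset_closedBall hζ))
    exact (analyticAt_snd.inv (Metric.ne_of_mem_sphere hζ hρ.ne')).mul
      ((hbU _ hmem).div (hδU _ hmem) (hne 0 h0 ζ hζ))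
  · filter_upwards [Metric.ball_mem_nhds 0 hε] with z hz
    have hmem : ∀ t ∈ Metric.closedBall (0 : ℂ) ρ, (z, t) ∈ U := fun t ht => hsub ⟨hz, ht⟩
    have hslice : Continuous fun t : ℂ => z + t • w := by fun_prop
    simpa using eq_circleIntegral_div_mul_of_norm_le (b := fun t => b (z + t • w))
      (δ := fun t => δ (z + t • w)) hρ
      (fun t ht => analyticAt_prodMk_right (hbU _ (hmem t ht)))
      (fun t ht => analyticAt_prodMk_right (hδU _ (hmem t ht))) (hne z hz)
      fun t ht => hslice.continuousAt.eventually (hmem t ht).2.2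

end SeveralVariables

section CommonZeros

/-- The common zeros in `U` of the functions in `S`: the local model of an analytic set. -/
def commonZeros {α : Type*} (S : Set (α → ℂ)) (U : Set α) : Set α :=
  {x ∈ U | ∀ g ∈ S, g x = 0}

lemma eq_zero_of_mem_span {α : Type*} {S : Set (α → ℂ)} {a : α} (ha : ∀ g ∈ S, g a = 0) {g : α → ℂ}
    (hg : g ∈ Submodule.span ℂ S) : g a = 0 :=
  Submodule.span_le (p := LinearMap.ker (LinearMap.proj (φ := fun _ : α => ℂ) a)).2 ha hg

-- A complex vector space is not a finite union of proper subspaces.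
lemma exists_mem_span_forall_ne_zero {α : Type*} {P : Set α} (hP : P.Finite) {S : Set (α → ℂ)}
    (hS : ∀ a ∈ P, ∃ g ∈ S, g a ≠ 0) : ∃ g ∈ Submodule.span ℂ S, ∀ a ∈ P, g a ≠ 0 := by
  by_contra! hcon
  have := hP.to_subtype
  let vanishing : P → Submodule ℂ (Submodule.span ℂ S) := fun a =>
    LinearMap.ker (LinearMap.proj (R := ℂ) (φ := fun _ : α => ℂ) a.1 ∘ₗ
      (Submodule.span ℂ S).subtype)
  have hcover : ⋃ a, (vanishing a : Set (Submodule.span ℂ S)) = univ := by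
    refine eq_univ_of_forall fun g => ?_
    obtain ⟨a, ha, hga⟩ := hcon g.1 g.2
    exact mem_iUnion.2 ⟨⟨a, ha⟩, hga⟩
  obtain ⟨a, ha⟩ := Subspace.exists_eq_top_of_iUnion_eq_univ hcover
  obtain ⟨g, hg, hga⟩ := hS a.1 a.2
  have hmem : (⟨g, Submodule.subset_span hg⟩ : Submodule.span ℂ S) ∈ vanishing a :=
    ha ▸ Submodule.mem_top
  exact hga hmem

lemma not_eventually_of_cone {E : Type*} [NormedAddCommGroup E] {P : E × ℂ → Prop} {C : ℝ}
    (hP : ∀ᶠ q in 𝓝 0, P q → ‖q.2‖ ≤ C * ‖q.1‖) : ¬ ∀ᶠ t in 𝓝 (0 : ℂ), P (0, t) := fun h => by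
  have heq : ∀ᶠ t in 𝓝 (0 : ℂ), t = 0 := by
    filter_upwards [h, ((Continuous.prodMk_right (0 : E)).tendsto 0).eventually hP] with t ht htP
    simpa using htP ht
  obtain ⟨t, ht, ht0⟩ := ((heq.filter_mono nhdsWithin_le_nhds).and
    (self_mem_nhdsWithin (s := {(0 : ℂ)}ᶜ))).exists
  exact ht0 ht

variable {E F : Type*} [NormedAddCommGroup E] [NormedSpace ℂ E] [NormedAddCommGroup F]
  [NormedSpace ℂ F]

lemma analyticOnNhd_of_mem_span {U : Set F} {S : Set (F → ℂ)} (hS : ∀ g ∈ S, AnalyticOnNhd ℂ g U)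
    {g : F → ℂ} (hg : g ∈ Submodule.span ℂ S) : AnalyticOnNhd ℂ g U := by
  induction hg using Submodule.span_induction with
  | mem g hg => exact hS g hg
  | zero => exact analyticOnNhd_const
  | add f g _ _ hf hg => exact hf.add hg
  | smul a f _ hf => exact analyticOnNhd_const.mul hf

variable {U : Set (E × ℂ)} {S : Set (E × ℂ → ℂ)}

lemma exists_mem_not_eventually_eq_zero_of_cone (hU : U ∈ 𝓝 0)
    (hS : ∀ g ∈ S, AnalyticOnNhd ℂ g U) {C : ℝ}
    (hcone : ∀ᶠ q in 𝓝 0, q ∈ commonZeros S U → ‖q.2‖ ≤ C * ‖q.1‖) :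
    ∃ h ∈ S, ¬ ∀ᶠ t in 𝓝 (0 : ℂ), h (0, t) = 0 := by
  by_contra! hcon
  have haxis : Tendsto (fun t : ℂ => ((0 : E), t)) (𝓝 0) (𝓝 0) :=
    (Continuous.prodMk_right (0 : E)).tendsto 0
  obtain ⟨r, hr, hrU⟩ := Metric.mem_nhds_iff.1 (haxis hU)
  have hzero : ∀ g ∈ S, ∀ t ∈ Metric.ball (0 : ℂ) r, g (0, t) = 0 := fun g hg =>
    AnalyticOnNhd.eqOn_zero_of_preconnected_of_eventuallyEq_zero
      (fun t ht => analyticAt_prodMk_right (hS g hg _ (hrU ht)))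
      (convex_ball 0 r).isPreconnected (Metric.mem_ball_self hr) (hcon g hg)
  refine not_eventually_of_cone hcone ?_
  filter_upwards [Metric.ball_mem_nhds 0 hr] with t ht
  exact ⟨hrU ht, fun g hg => hzero g hg t ht⟩

lemma IsRootFamily.analyticOnNhd_prod {h : E × ℂ → ℂ} {ε ρ : ℝ} {k : ℕ} {σ : E → Multiset ℂ}
    (hσ : IsRootFamily h U ε ρ k σ) {g : E × ℂ → ℂ} (hg : AnalyticOnNhd ℂ g U) :
    AnalyticOnNhd ℂ (fun z => ((σ z).map fun t => g (z, t)).prod) (Metric.ball 0 ε) := by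
  refine (hσ.analyticOnNhd_esymm g hg k).congr Metric.isOpen_ball fun z hz => ?_
  have hk : ((σ z).map fun t => g (z, t)).card = k := by rw [Multiset.card_map, hσ.card_eq z hz]
  simp only [Multiset.esymm]
  rw [← hk, Multiset.powersetCard_self, Multiset.map_singleton, Multiset.sum_singleton]

-- The projection is cut out by the norms `z ↦ ∏ g (z, t)` over the zeros `t` of `h (z, ·)`, for all
-- `g` in the span of `S`.
lemma exists_projection_commonZeros (hU : U ∈ 𝓝 0) (hS : ∀ g ∈ S, AnalyticOnNhd ℂ g U)
    {h : E × ℂ → ℂ} (hhS : h ∈ S) (h0 : ¬ ∀ᶠ t in 𝓝 (0 : ℂ), h (0, t) = 0) :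
    ∃ ε > 0, ∃ T : Set (E → ℂ), (∀ g ∈ T, AnalyticOnNhd ℂ g (Metric.ball 0 ε)) ∧
      (∀ z ∈ commonZeros T (Metric.ball 0 ε), ∃ t, (z, t) ∈ commonZeros S U) ∧
      ∀ᶠ q in 𝓝 (0 : E × ℂ), q ∈ commonZeros S U → q.1 ∈ commonZeros T (Metric.ball 0 ε) := by
  obtain ⟨ρ, hρ, ε, hε, k, σ, hσ⟩ := exists_isRootFamily hU (hS h hhS) h0
  let rootProd : (E × ℂ → ℂ) → E → ℂ := fun g z => ((σ z).map fun t => g (z, t)).prod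
  have hrootProd : ∀ g z, rootProd g z = 0 ↔ ∃ t ∈ σ z, g (z, t) = 0 := fun g z => by
    simp [rootProd, Multiset.prod_eq_zero_iff]
  refine ⟨ε, hε, rootProd '' Submodule.span ℂ S, ?_, ?_, ?_⟩
  · rintro _ ⟨g, hg, rfl⟩
    exact hσ.analyticOnNhd_prod (analyticOnNhd_of_mem_span hS hg)
  · rintro z ⟨hz, hz0⟩
    suffices ∃ t ∈ σ z, ∀ g ∈ S, g (z, t) = 0 by
      obtain ⟨t, ht, htS⟩ := this
      have htρ : ‖t‖ < ρ := ((hσ.mem_iff z hz t).1 ht).1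
      exact ⟨t, hσ.subset ⟨hz, by simpa using htρ.le⟩, htS⟩
    by_contra! hcon
    obtain ⟨g, hg, hg0⟩ := exists_mem_span_forall_ne_zero (S := S)
      (((σ z).finite_toSet).image fun t => (z, t)) (forall_mem_image.2 hcon)
    obtain ⟨t, ht, hgt⟩ := (hrootProd g z).1 (hz0 _ ⟨g, hg, rfl⟩)
    exact hg0 _ ⟨t, ht, rfl⟩ hgt
  · filter_upwards [prod_mem_nhds (Metric.ball_mem_nhds 0 hε) (Metric.ball_mem_nhds 0 hρ)]
      with q hq hqS
    have hmem : q.2 ∈ σ q.1 := (hσ.mem_iff _ hq.1 _).2 ⟨by simpa using hq.2, hqS.2 h hhS⟩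
    refine ⟨hq.1, ?_⟩
    rintro _ ⟨g, hg, rfl⟩
    exact (hrootProd g _).2 ⟨q.2, hmem, eq_zero_of_mem_span hqS.2 hg⟩

end CommonZeros

section LinearProducts

open Polynomial

/-- The product `∏ (aᵢ X + bᵢ)` over a multiset of indices. -/
def linearProd {ι : Type*} (s : Multiset ι) (a b : ι → ℂ) : ℂ[X] :=
  (s.map fun i => C (a i) * X + C (b i)).prod

variable {ι : Type*} (s : Multiset ι) (a b : ι → ℂ)

lemma natDegree_linearProd_le : (linearProd s a b).natDegree ≤ s.card := by
  refine (natDegree_multiset_prod_le _).trans ?_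
  rw [Multiset.map_map]
  refine (Multiset.sum_le_card_nsmul _ 1 ?_).trans (by simp)
  simp only [Multiset.mem_map, Function.comp_apply, forall_exists_index, and_imp,
    forall_apply_eq_imp_iff₂]
  exact fun i _ => natDegree_linear_le

lemma eval_linearProd (u : ℂ) :
    (linearProd s a b).eval u = (s.map fun i => a i * u + b i).prod := by
  simp [linearProd, eval_multiset_prod, Multiset.map_map]

lemma linearProd_eq_mul :
    linearProd s a b = C ((s.filter fun i => b i = 0).map a).prod *
      X ^ (s.filter fun i => b i = 0).card * linearProd (s.filter fun i => ¬ b i = 0) a b := by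
  conv_lhs => rw [linearProd, ← Multiset.filter_add_not (fun i => b i = 0) s, Multiset.map_add,
    Multiset.prod_add]
  congr 1
  rw [Multiset.map_congr rfl fun i hi => by rw [(Multiset.mem_filter.1 hi).2, C_0, add_zero],
    Multiset.prod_map_mul, Multiset.map_const', Multiset.prod_replicate, map_multiset_prod,
    Multiset.map_map]
  rfl

lemma coeff_linearProd_of_lt {m : ℕ} (hm : m < (s.filter fun i => b i = 0).card) :
    (linearProd s a b).coeff m = 0 := by
  rw [linearProd_eq_mul, mul_right_comm, coeff_mul_X_pow', if_neg hm.not_ge]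

lemma coeff_linearProd_card :
    (linearProd s a b).coeff (s.filter fun i => b i = 0).card =
      ((s.filter fun i => b i = 0).map a).prod * ((s.filter fun i => ¬ b i = 0).map b).prod := by
  rw [linearProd_eq_mul, mul_right_comm, coeff_mul_X_pow', if_pos le_rfl, Nat.sub_self,
    coeff_C_mul, coeff_zero_eq_eval_zero, eval_linearProd]
  simp

variable {F : Type*} [NormedAddCommGroup F] [NormedSpace ℂ F]

-- By Lagrange interpolation a coefficient is a linear combination of finitely many values.
lemma analyticAt_coeff_of_eval {P : F → ℂ[X]} {x : F} {k : ℕ}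
    (hdeg : ∀ᶠ y in 𝓝 x, (P y).natDegree ≤ k)
    (hP : ∀ u, AnalyticAt ℂ (fun y => (P y).eval u) x) (j : ℕ) :
    AnalyticAt ℂ (fun y => (P y).coeff j) x := by
  have hinterp : AnalyticAt ℂ (fun y => ∑ i ∈ Finset.range (k + 1), (P y).eval (i : ℂ) *
      (Lagrange.basis (Finset.range (k + 1)) (fun i : ℕ => (i : ℂ)) i).coeff j) x :=
    Finset.analyticAt_fun_sum _ fun i _ => (hP i).mul analyticAt_const
  refine hinterp.congr ?_
  filter_upwards [hdeg] with y hy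
  have hlt : (P y).degree < (Finset.range (k + 1)).card := by
    rw [Finset.card_range]
    exact degree_le_natDegree.trans_lt (mod_cast Nat.lt_succ_of_le hy)
  conv_rhs => rw [Lagrange.eq_interpolate (v := fun i : ℕ => (i : ℂ)) Nat.cast_injective.injOn hlt]
  simp [Lagrange.interpolate_apply, finsetSum_coeff]

variable {E : Type*} [NormedAddCommGroup E] [NormedSpace ℂ E] {U : Set (E × ℂ)}
  {h f : E × ℂ → ℂ} {ε ρ : ℝ} {k : ℕ} {σ : E → Multiset ℂ}

lemma IsRootFamily.analyticAt_coeff_one (hσ : IsRootFamily h U ε ρ k σ)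
    (hf : AnalyticOnNhd ℂ f U) (j : ℕ) {z : E} (hz : z ∈ Metric.ball 0 ε) :
    AnalyticAt ℂ (fun z => (linearProd (σ z) 1 fun a => f (z, a)).coeff j) z := by
  refine analyticAt_coeff_of_eval (k := k) ?_ (fun u => ?_) j
  · filter_upwards [Metric.isOpen_ball.mem_nhds hz] with y hy
    exact (natDegree_linearProd_le _ _ _).trans (hσ.card_eq y hy).le
  · simp only [eval_linearProd, Pi.one_apply, one_mul]
    exact hσ.analyticOnNhd_prod (analyticOnNhd_const.add hf) z hz

lemma IsRootFamily.analyticAt_coeff_sub (hσ : IsRootFamily h U ε ρ k σ)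
    (hf : AnalyticOnNhd ℂ f U) (j : ℕ) {q : E × ℂ} (hq : q.1 ∈ Metric.ball 0 ε) :
    AnalyticAt ℂ (fun q : E × ℂ => (linearProd (σ q.1) (fun a => q.2 - a)
      fun a => f (q.1, a)).coeff j) q := by
  have hball : ∀ᶠ p : E × ℂ in 𝓝 q, p.1 ∈ Metric.ball 0 ε :=
    continuous_fst.continuousAt (Metric.isOpen_ball.mem_nhds hq)
  refine analyticAt_coeff_of_eval (k := k) ?_ (fun u => ?_) j
  · filter_upwards [hball] with p hp
    exact (natDegree_linearProd_le _ _ _).trans (hσ.card_eq _ hp).le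
  · have hsum : AnalyticAt ℂ (fun p : E × ℂ => ∑ i ∈ Finset.range (k + 1),
        ((σ p.1).map fun a => f (p.1, a) - u * a).esymm i * (u * p.2) ^ (k - i)) q :=
      Finset.analyticAt_fun_sum _ fun i _ => AnalyticAt.mul
        ((hσ.analyticOnNhd_esymm _ (hf.sub (analyticOnNhd_const.mul analyticOnNhd_snd)) i
          q.1 hq).comp_of_eq analyticAt_fst rfl)
        ((analyticAt_const.mul analyticAt_snd).pow _)
    refine hsum.congr ?_
    filter_upwards [hball] with p hp
    have hvieta := congrArg (eval (u * p.2))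
      (Multiset.prod_X_add_C_eq_sum_esymm ((σ p.1).map fun a => f (p.1, a) - u * a))
    simp only [eval_multiset_prod, Multiset.map_map, Function.comp_def, eval_add, eval_X, eval_C,
      Multiset.card_map, hσ.card_eq _ hp, eval_finsetSum, eval_mul, eval_pow] at hvieta
    rw [← hvieta, eval_linearProd]
    congr 2 with a
    ring

end LinearProducts

section RegularOfOrder

lemma exists_mem_span_card_filter_minimal {α β : Type*} (σ : α → Multiset β)
    (S : Set (α × β → ℂ)) {B : Set α} (hB : B.Nonempty) :
    ∃ (m : ℕ), ∃ f ∈ Submodule.span ℂ S,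
      (∃ z ∈ B, ((σ z).filter fun a => f (z, a) = 0).card = m) ∧
      ∀ z ∈ B, m ≤ ((σ z).filter fun a => f (z, a) = 0).card ∧
        (((σ z).filter fun a => f (z, a) = 0).card = m →
          ∀ a ∈ σ z, f (z, a) = 0 → ∀ g ∈ S, g (z, a) = 0) := by
  classical
  let common : α → Multiset β := fun z => (σ z).filter fun a => ∀ g ∈ S, g (z, a) = 0
  obtain ⟨z₀, hz₀, hmin⟩ :=
    exists_minimalFor_of_wellFoundedLT (· ∈ B) (fun z => (common z).card) hB
  have hfin : {a | a ∈ σ z₀ ∧ ∃ g ∈ S, g (z₀, a) ≠ 0}.Finite :=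
    (σ z₀).finite_toSet.subset fun a ha => ha.1
  obtain ⟨f, hf, hf0⟩ := exists_mem_span_forall_ne_zero (S := S) (hfin.image fun a => (z₀, a))
    (forall_mem_image.2 fun a ha => ha.2)
  have hle : ∀ z, common z ≤ (σ z).filter fun a => f (z, a) = 0 := fun z =>
    Multiset.monotone_filter_right _ fun a ha => eq_zero_of_mem_span ha hf
  have heq : common z₀ = (σ z₀).filter fun a => f (z₀, a) = 0 := by
    refine Multiset.filter_congr fun a ha => ⟨fun h => eq_zero_of_mem_span h hf, fun h => ?_⟩
    by_contra! hne
    exact hf0 _ ⟨a, ⟨ha, hne⟩, rfl⟩ h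
  have hcard : ∀ z ∈ B, (common z₀).card ≤ (common z).card := fun z hz =>
    (le_total _ _).elim id (hmin hz)
  refine ⟨(common z₀).card, f, hf, ⟨z₀, hz₀, by rw [heq]⟩, fun z hz =>
    ⟨(hcard z hz).trans (Multiset.card_le_card (hle z)), fun hz_card a ha hfa => ?_⟩⟩
  have hcommon : common z = (σ z).filter fun a => f (z, a) = 0 :=
    Multiset.eq_of_le_of_card_le (hle z) (hz_card.trans_le (hcard z hz))
  have hmem : a ∈ common z := hcommon ▸ Multiset.mem_filter.2 ⟨ha, hfa⟩
  exact (Multiset.mem_filter.1 hmem).2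

variable {E : Type*} [NormedAddCommGroup E] [NormedSpace ℂ E]

-- `δ` and `B` are the coefficients of `X ^ m` in `∏ (X + f (z, a))` and `∏ ((t - a) X + f (z, a))`,
-- where `a` runs over the zeros of `h (z, ·)` and `m` is the least number of common zeros of `S`
-- among them.
lemma IsRootFamily.exists_generic_factor {U : Set (E × ℂ)} {S : Set (E × ℂ → ℂ)} {h : E × ℂ → ℂ}
    {ε ρ : ℝ} {k : ℕ} {σ : E → Multiset ℂ} (hσ : IsRootFamily h U ε ρ k σ) (hε : 0 < ε)
    (hS : ∀ g ∈ S, AnalyticOnNhd ℂ g U) (hhS : h ∈ S) :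
    ∃ (m : ℕ) (δ : E → ℂ) (B : E × ℂ → ℂ) (τ : E → Multiset ℂ),
      AnalyticOnNhd ℂ δ (Metric.ball 0 ε) ∧ (∃ z ∈ Metric.ball 0 ε, δ z ≠ 0) ∧
      AnalyticAt ℂ B 0 ∧ ∀ z ∈ Metric.ball 0 ε,
        (∀ t, B (z, t) = δ z * ((τ z).map (t - ·)).prod) ∧
        (∀ t, ‖t‖ < ρ → (z, t) ∈ commonZeros S U → t ∈ τ z) ∧
        (δ z ≠ 0 → (τ z).card = m ∧ ∀ a ∈ τ z, (z, a) ∈ commonZeros S U) := by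
  obtain ⟨m, f, hf, ⟨z₀, hz₀, hm⟩, hmin⟩ :=
    exists_mem_span_card_filter_minimal σ S ⟨0, Metric.mem_ball_self hε⟩
  have hfU : AnalyticOnNhd ℂ f U := analyticOnNhd_of_mem_span hS hf
  let τ : E → Multiset ℂ := fun z => (σ z).filter fun a => f (z, a) = 0
  let δ : E → ℂ := fun z => (linearProd (σ z) 1 fun a => f (z, a)).coeff m
  let B : E × ℂ → ℂ := fun q =>
    (linearProd (σ q.1) (fun a => q.2 - a) fun a => f (q.1, a)).coeff m
  have hlt : ∀ z, m < (τ z).card → ∀ c, (linearProd (σ z) c fun a => f (z, a)).coeff m = 0 :=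
    fun z hz c => coeff_linearProd_of_lt _ _ _ hz
  have hcard : ∀ z, (τ z).card = m → ∀ c, (linearProd (σ z) c fun a => f (z, a)).coeff m =
      ((τ z).map c).prod * (((σ z).filter fun a => ¬ f (z, a) = 0).map fun a => f (z, a)).prod :=
    fun z hz c => by rw [← hz]; exact coeff_linearProd_card _ _ _
  have hδ0 : δ z₀ ≠ 0 := by
    simp [δ, hcard z₀ hm, Multiset.prod_eq_zero_iff]
  refine ⟨m, δ, B, τ, fun z hz => hσ.analyticAt_coeff_one hfU m hz, ⟨z₀, hz₀, hδ0⟩,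
    hσ.analyticAt_coeff_sub hfU m (Metric.mem_ball_self hε), fun z hz =>
    ⟨fun t => ?_, fun t ht htS => ?_, fun hδz => ?_⟩⟩
  · rcases (hmin z hz).1.lt_or_eq with hτ | hτ
    · simp only [B, δ, hlt z hτ, zero_mul]
    · simp [B, δ, hcard z hτ.symm, mul_comm]
  · exact Multiset.mem_filter.2
      ⟨(hσ.mem_iff z hz t).2 ⟨ht, htS.2 h hhS⟩, eq_zero_of_mem_span htS.2 hf⟩
  · have hτ : (τ z).card = m := (hmin z hz).1.antisymm' (not_lt.1 fun hτ => hδz (hlt z hτ _))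
    refine ⟨hτ, fun a ha => ?_⟩
    obtain ⟨haσ, hfa⟩ := Multiset.mem_filter.1 ha
    have haρ : ‖a‖ < ρ := ((hσ.mem_iff z hz a).1 haσ).1
    exact ⟨hσ.subset ⟨hz, by simpa using haρ.le⟩, (hmin z hz).2 hτ a haσ hfa⟩

lemma norm_multiset_prod_sub_mem_Icc {s : Multiset ℂ} {r : ℝ} (hs : ∀ a ∈ s, ‖a‖ ≤ r) (t : ℂ) :
    ‖(s.map (t - ·)).prod‖ ∈ Icc (max (‖t‖ - r) 0 ^ s.card) ((‖t‖ + r) ^ s.card) := by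
  induction s using Multiset.induction_on with
  | empty => simp
  | cons a s ih =>
    obtain ⟨hlow, hupp⟩ := ih fun b hb => hs b (Multiset.mem_cons_of_mem hb)
    have ha : ‖a‖ ≤ r := hs a (Multiset.mem_cons_self a s)
    have hr : 0 ≤ ‖t‖ + r := by linarith [norm_nonneg t, norm_nonneg a]
    rw [Multiset.map_cons, Multiset.prod_cons, Multiset.card_cons, norm_mul, pow_succ', pow_succ']
    refine ⟨mul_le_mul (max_le ?_ (norm_nonneg _)) hlow (by positivity) (norm_nonneg _),
      mul_le_mul ?_ hupp (norm_nonneg _) hr⟩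
    · linarith [norm_sub_norm_le t a]
    · linarith [norm_sub_le t a]

/-- `g` vanishes to order at least `d` at the origin, and to order at most `d` on the axis
`{0} × ℂ`; the lower bound on the axis is normalized. -/
structure IsRegularOfOrder (g : E × ℂ → ℂ) (d : ℕ) : Prop where
  analyticAt : AnalyticAt ℂ g 0
  isBigO : g =O[𝓝 0] fun q => ‖q‖ ^ d
  le_norm : ∀ᶠ t in 𝓝 (0 : ℂ), ‖t‖ ^ d ≤ ‖g (0, t)‖

lemma IsRegularOfOrder.mul {g₁ g₂ : E × ℂ → ℂ} {d₁ d₂ : ℕ} (h₁ : IsRegularOfOrder g₁ d₁)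
    (h₂ : IsRegularOfOrder g₂ d₂) : IsRegularOfOrder (fun q => g₁ q * g₂ q) (d₁ + d₂) where
  analyticAt := h₁.analyticAt.mul h₂.analyticAt
  isBigO := by simpa only [pow_add] using h₁.isBigO.mul h₂.isBigO
  le_norm := by
    filter_upwards [h₁.le_norm, h₂.le_norm] with t ht₁ ht₂
    rw [pow_add, norm_mul]
    gcongr

lemma IsRegularOfOrder.comp_clm {F : Type*} [NormedAddCommGroup F] [NormedSpace ℂ F]
    {g : F × ℂ → ℂ} {d : ℕ} (hg : IsRegularOfOrder g d) (L : E →L[ℂ] F) :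
    IsRegularOfOrder (fun q => g (L q.1, q.2)) d := by
  let L' : E × ℂ →L[ℂ] F × ℂ := L.prodMap (ContinuousLinearMap.id ℂ ℂ)
  have hL' : Tendsto L' (𝓝 0) (𝓝 0) := by simpa only [map_zero] using L'.continuous.tendsto 0
  refine ⟨hg.analyticAt.comp_of_eq (L'.analyticAt 0) (map_zero L'), ?_, ?_⟩
  · exact (hg.isBigO.comp_tendsto hL').trans ((L'.isBigO_id _).norm_left.norm_right.pow d)
  · simpa using hg.le_norm

lemma eventually_norm_mem_Icc_of_ne_zero {F : Type*} [NormedAddCommGroup F] [NormedSpace ℂ F]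
    {δ Q : F → ℂ} {l u : F → ℝ} {x : F} (hδ : AnalyticAt ℂ δ x) (hδ0 : ¬ ∀ᶠ y in 𝓝 x, δ y = 0)
    (hQ : ∀ᶠ y in 𝓝 x, ContinuousAt Q y) (hl : Continuous l) (hu : Continuous u)
    (h : ∀ᶠ y in 𝓝 x, δ y ≠ 0 → ‖Q y‖ ∈ Icc (l y) (u y)) :
    ∀ᶠ y in 𝓝 x, ‖Q y‖ ∈ Icc (l y) (u y) := by
  filter_upwards [h.eventually_nhds, eventually_frequently_ne_zero hδ hδ0, hQ] with y hy hfreq hQy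
  have hfreq' := (hfreq.and_eventually hy).mono fun p hp => hp.2 hp.1
  exact ⟨le_of_tendsto_of_tendsto_of_frequently (hl.tendsto y) hQy.norm
      (hfreq'.mono fun _ hp => hp.1),
    le_of_tendsto_of_tendsto_of_frequently hQy.norm (hu.tendsto y) (hfreq'.mono fun _ hp => hp.2)⟩

lemma exists_isRegularOfOrder_of_eq_mul_prod {δ : E → ℂ} {B : E × ℂ → ℂ} {τ : E → Multiset ℂ}
    {m : ℕ} {C : ℝ} (hC : 0 ≤ C) (hδ : AnalyticAt ℂ δ 0) (hδ0 : ¬ ∀ᶠ z in 𝓝 0, δ z = 0)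
    (hB : AnalyticAt ℂ B 0)
    (hBδ : ∀ᶠ q in 𝓝 (0 : E × ℂ), B q = δ q.1 * ((τ q.1).map (q.2 - ·)).prod)
    (hτ : ∀ᶠ z in 𝓝 0, δ z ≠ 0 → (τ z).card = m ∧ ∀ a ∈ τ z, ‖a‖ ≤ C * ‖z‖) :
    ∃ Q, IsRegularOfOrder Q m ∧ ∀ᶠ q in 𝓝 0, B q = Q q * δ q.1 := by
  have hfst : Tendsto (Prod.fst : E × ℂ → E) (𝓝 0) (𝓝 0) := continuous_fst.tendsto 0
  have hδ' : AnalyticAt ℂ (fun q : E × ℂ => δ q.1) 0 := hδ.comp_of_eq analyticAt_fst rfl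
  have hδ0' : ¬ ∀ᶠ q in 𝓝 (0 : E × ℂ), δ q.1 = 0 := fun h =>
    hδ0 (((Continuous.prodMk_left (0 : ℂ)).tendsto (0 : E)).eventually h)
  have hprod : ∀ᶠ q : E × ℂ in 𝓝 0, δ q.1 ≠ 0 → ‖((τ q.1).map (q.2 - ·)).prod‖ ∈
      Icc (max (‖q.2‖ - C * ‖q.1‖) 0 ^ m) ((‖q.2‖ + C * ‖q.1‖) ^ m) := by
    filter_upwards [hfst.eventually hτ] with q hq hδq
    obtain ⟨hcard, hle⟩ := hq hδq
    exact hcard ▸ norm_multiset_prod_sub_mem_Icc hle q.2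
  have hle_one : ∀ᶠ q : E × ℂ in 𝓝 0, ‖q.2‖ + C * ‖q.1‖ < 1 := by
    have hcont : ContinuousAt (fun q : E × ℂ => ‖q.2‖ + C * ‖q.1‖) 0 := by fun_prop
    exact hcont.eventually_lt_const (by simp)
  obtain ⟨Q, hQ, hBQ⟩ := exists_analyticAt_eq_mul_of_norm_le (C := 1) hB hδ' hδ0' <| by
    filter_upwards [hBδ, hprod, hle_one] with q hBq hq hq1
    rw [hBq, norm_mul, mul_comm]
    rcases eq_or_ne (δ q.1) 0 with hδq | hδq
    · simp [hδq]
    · gcongr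
      exact (hq hδq).2.trans (pow_le_one₀ (by positivity) hq1.le)
  have hQprod : ∀ᶠ q : E × ℂ in 𝓝 0, δ q.1 ≠ 0 →
      ‖Q q‖ ∈ Icc (max (‖q.2‖ - C * ‖q.1‖) 0 ^ m) ((‖q.2‖ + C * ‖q.1‖) ^ m) := by
    filter_upwards [hBQ, hBδ, hprod] with q hq₁ hq₂ hq hδq
    rw [mul_right_cancel₀ hδq (hq₁.symm.trans (hq₂.trans (mul_comm _ _)))]
    exact hq hδq
  have hQbound := eventually_norm_mem_Icc_of_ne_zero hδ' hδ0'
    (hQ.eventually_analyticAt.mono fun _ h => h.continuousAt)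
    (by fun_prop) (by fun_prop) hQprod
  refine ⟨Q, ⟨hQ, .of_bound ((1 + C) ^ m) ?_, ?_⟩, hBQ⟩
  · filter_upwards [hQbound] with q hq
    rw [norm_pow, norm_norm, ← mul_pow, add_mul, one_mul]
    refine hq.2.trans ?_
    gcongr
    · exact norm_snd_le q
    · exact norm_fst_le q
  · filter_upwards [((Continuous.prodMk_right (0 : E)).tendsto (0 : ℂ)).eventually hQbound]
      with t ht
    simpa using ht.1

lemma exists_isRegularOfOrder_of_cone {U : Set (E × ℂ)} (hU : U ∈ 𝓝 0) {S : Set (E × ℂ → ℂ)}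
    (hS : ∀ g ∈ S, AnalyticOnNhd ℂ g U) {C : ℝ}
    (hcone : ∀ᶠ q in 𝓝 0, q ∈ commonZeros S U → ‖q.2‖ ≤ C * ‖q.1‖) :
    ∃ (m : ℕ) (Q : E × ℂ → ℂ) (δ : E → ℂ), IsRegularOfOrder Q m ∧ AnalyticAt ℂ δ 0 ∧
      (¬ ∀ᶠ z in 𝓝 0, δ z = 0) ∧ ∀ᶠ q in 𝓝 0, q ∈ commonZeros S U → Q q = 0 ∨ δ q.1 = 0 := by
  set V : Set (E × ℂ) := U ∩ {q | q ∈ commonZeros S U → ‖q.2‖ ≤ C * ‖q.1‖}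
  have hV : V ∈ 𝓝 0 := inter_mem hU hcone
  have hSV : ∀ g ∈ S, AnalyticOnNhd ℂ g V := fun g hg => (hS g hg).mono inter_subset_left
  have hconeV : ∀ q ∈ commonZeros S V, ‖q.2‖ ≤ |C| * ‖q.1‖ := fun q hq =>
    (hq.1.2 ⟨hq.1.1, hq.2⟩).trans (by gcongr; exact le_abs_self C)
  obtain ⟨h, hhS, h0⟩ := exists_mem_not_eventually_eq_zero_of_cone hU hS hcone
  obtain ⟨ρ, hρ, ε, hε, k, σ, hσ⟩ := exists_isRootFamily hV (hSV h hhS) h0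
  obtain ⟨m, δ, B, τ, hδ, ⟨z₀, hz₀, hδz₀⟩, hB, hfactor⟩ := hσ.exists_generic_factor hε hSV hhS
  have hball : ∀ᶠ z in 𝓝 (0 : E), z ∈ Metric.ball 0 ε := Metric.ball_mem_nhds 0 hε
  have hball' : ∀ᶠ q in 𝓝 (0 : E × ℂ), q.1 ∈ Metric.ball 0 ε :=
    (continuous_fst.tendsto (0 : E × ℂ)).eventually hball
  have hρ' : ∀ᶠ q in 𝓝 (0 : E × ℂ), ‖q.2‖ < ρ :=
    continuous_snd.norm.continuousAt.eventually_lt_const (by simpa)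
  have hδ0 : ¬ ∀ᶠ z in 𝓝 0, δ z = 0 := not_eventually_eq_zero_of_isPreconnected hδ
    (convex_ball 0 ε).isPreconnected hz₀ hδz₀ (Metric.mem_ball_self hε)
  obtain ⟨Q, hQ, hBQ⟩ := exists_isRegularOfOrder_of_eq_mul_prod (m := m) (abs_nonneg C)
    (hδ 0 (Metric.mem_ball_self hε)) hδ0 hB (hball'.mono fun q hq => (hfactor q.1 hq).1 q.2)
    (hball.mono fun z hz hδz => ((hfactor z hz).2.2 hδz).imp_right
      fun hτ a ha => hconeV (z, a) (hτ a ha))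
  refine ⟨m, Q, δ, hQ, hδ 0 (Metric.mem_ball_self hε), hδ0, ?_⟩
  filter_upwards [hball', hρ', hBQ, hV] with q hq hqρ hBq hqV hqS
  have hmem : q.2 ∈ τ q.1 := (hfactor q.1 hq).2.1 q.2 hqρ ⟨hqV, hqS.2⟩
  have hB0 : B q = 0 := by
    rw [(hfactor q.1 hq).1 q.2, Multiset.prod_eq_zero, mul_zero]
    exact Multiset.mem_map.2 ⟨q.2, hmem, sub_self _⟩
  exact mul_eq_zero.1 (hBq.symm.trans hB0)

end RegularOfOrder

section TangentCone

variable {E : Type*} [NormedAddCommGroup E] [NormedSpace ℂ E]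

lemma isBigO_sub_initialPart {g : E → ℂ} {p : FormalMultilinearSeries ℂ E ℂ} {x : E} {d : ℕ}
    (hg : HasFPowerSeriesAt g p x) (hp : ∀ e < d, ∀ y, (p e fun _ => y) = 0) :
    (fun y => g (x + y) - p d fun _ => y) =O[𝓝 0] fun y => ‖y‖ ^ (d + 1) := by
  refine (hg.isBigO_sub_partialSum_pow (d + 1)).congr_left fun y => ?_
  rw [FormalMultilinearSeries.partialSum, Finset.sum_range_succ, Finset.sum_eq_zero, zero_add]
  exact fun e he => hp e (Finset.mem_range.1 he) y

lemma tendsto_pow_mul_of_tendsto_smul {g : E → ℂ} {p : FormalMultilinearSeries ℂ E ℂ} {x v : E}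
    {d : ℕ} (hg : HasFPowerSeriesAt g p x) (hp : ∀ e < d, ∀ y, (p e fun _ => y) = 0)
    {ι : Type*} {l : Filter ι} {t : ι → ℂ} {y : ι → E} (hy : Tendsto y l (𝓝 0))
    (hty : Tendsto (fun i => t i • y i) l (𝓝 v)) :
    Tendsto (fun i => t i ^ d * g (x + y i)) l (𝓝 (p d fun _ => v)) := by
  have hpd : Tendsto (fun i => p d fun _ => t i • y i) l (𝓝 (p d fun _ => v)) :=
    ((p d).cont.comp (continuous_pi fun _ => continuous_id)).continuousAt.tendsto.comp hty
  have herror : Tendsto (fun i => t i ^ d * (g (x + y i) - p d fun _ => y i)) l (𝓝 0) := by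
    have hO := (Asymptotics.isBigO_refl (fun i => t i ^ d) l).norm_right.mul
      ((isBigO_sub_initialPart hg hp).comp_tendsto hy)
    have hbound : ∀ i, ‖t i ^ d‖ * ‖y i‖ ^ (d + 1) = ‖t i • y i‖ ^ d * ‖y i‖ := fun i => by
      rw [norm_pow, norm_smul]
      ring
    refine (hO.congr_right hbound).trans_tendsto ?_
    simpa using (hty.norm.pow d).mul hy.norm
  have hsum := herror.add hpd
  rw [zero_add] at hsum
  refine hsum.congr fun i => ?_
  have hhom : (p d fun _ => t i • y i) = t i ^ d * p d fun _ => y i := by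
    simpa using (p d).map_smul_univ (fun _ => t i) fun _ => y i
  rw [hhom]
  ring

lemma apply_eq_zero_of_mem_tangentConeSet {X : Set E} {g : E → ℂ}
    {p : FormalMultilinearSeries ℂ E ℂ} {x v : E} {d : ℕ} (hg : HasFPowerSeriesAt g p x)
    (hp : ∀ e < d, ∀ y, (p e fun _ => y) = 0) (hgX : ∀ᶠ y in 𝓝 x, y ∈ X → g y = 0)
    (hv : v ∈ tangentConeSet X x) : (p d fun _ => v) = 0 := by
  obtain ⟨xs, ts, hxsX, hxs, hts⟩ := hv
  have hlim := tendsto_pow_mul_of_tendsto_smul hg hp (tendsto_sub_nhds_zero_iff.2 hxs) hts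
  refine tendsto_nhds_unique_of_eventuallyEq hlim tendsto_const_nhds ?_
  filter_upwards [hxs.eventually hgX] with k hk
  rw [add_sub_cancel, hk (hxsX k), mul_zero]

lemma zero_mem_tangentConeSet {X : Set E} {x : E} (hx : x ∈ X) : 0 ∈ tangentConeSet X x :=
  ⟨fun _ => x, 0, fun _ => hx, tendsto_const_nhds, by simp⟩

lemma exists_cone_of_notMem_tangentConeSet {X : Set E} {x v : E} (hv : v ∉ tangentConeSet X x) :
    ∃ C : ℝ, ∀ᶠ q : E × ℂ in 𝓝 0, x + (q.1 + q.2 • v) ∈ X → ‖q.2‖ ≤ C * ‖q.1‖ := by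
  contrapose! hv
  have hseq : ∀ n : ℕ, ∃ q : E × ℂ, ‖q‖ < 1 / ((n : ℝ) + 1) ∧ x + (q.1 + q.2 • v) ∈ X ∧
      ((n : ℝ) + 1) * ‖q.1‖ < ‖q.2‖ := fun n => by
    have hball := Metric.ball_mem_nhds (0 : E × ℂ) (Nat.one_div_pos_of_nat (α := ℝ) (n := n))
    obtain ⟨q, hq, hqn⟩ := ((hv (n + 1)).and_eventually hball).exists
    exact ⟨q, by simpa using hqn, hq⟩
  choose q hq_lt hqX hq_cone using hseq
  have hq : Tendsto q atTop (𝓝 0) :=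
    squeeze_zero_norm (fun n => (hq_lt n).le) tendsto_one_div_add_atTop_nhds_zero_nat
  have hq_ne : ∀ n, (q n).2 ≠ 0 := fun n =>
    norm_pos_iff.1 ((hq_cone n).trans_le' (by positivity))
  have hratio : Tendsto (fun n => (q n).2⁻¹ • (q n).1) atTop (𝓝 0) := by
    refine squeeze_zero_norm (fun n => ?_) tendsto_one_div_add_atTop_nhds_zero_nat
    rw [norm_smul, norm_inv, inv_mul_le_iff₀ (norm_pos_iff.2 (hq_ne n)), mul_one_div,
      le_div_iff₀' (by positivity)]
    exact (hq_cone n).le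
  refine ⟨fun n => x + ((q n).1 + (q n).2 • v), fun n => (q n).2⁻¹, hqX, ?_, ?_⟩
  · have hcont : Continuous fun q : E × ℂ => x + (q.1 + q.2 • v) := by fun_prop
    simpa [Function.comp_def] using (hcont.tendsto 0).comp hq
  · simpa [smul_smul, inv_mul_cancel₀, hq_ne] using hratio.add_const v

lemma exists_cone_of_not_eventually_eq_zero {δ : E → ℂ} (hδ : AnalyticAt ℂ δ 0)
    (hδ0 : ¬ ∀ᶠ z in 𝓝 0, δ z = 0) (h0 : δ 0 = 0) :
    ∃ w ≠ 0, ∃ K : ℝ, ∀ᶠ q : E × ℂ in 𝓝 0, δ (q.1 + q.2 • w) = 0 → ‖q.2‖ ≤ K * ‖q.1‖ := by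
  classical
  obtain ⟨p, hp⟩ := hδ
  have hex : ∃ d, ∃ w : E, (p d fun _ => w) ≠ 0 := by
    by_contra! hcon
    refine hδ0 (hp.eventually_hasSum.mono fun z hz => ?_)
    simp only [hcon, zero_add] at hz
    exact hz.unique hasSum_zero
  obtain ⟨w, hw⟩ := Nat.find_spec hex
  have hlow : ∀ e < Nat.find hex, ∀ y, (p e fun _ => y) = 0 := fun e he => by
    simpa using Nat.find_min hex he
  have hwX : w ∉ tangentConeSet {z | δ z = 0} 0 := fun hmem =>
    hw (apply_eq_zero_of_mem_tangentConeSet hp hlow (.of_forall fun _ h => h) hmem)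
  obtain ⟨K, hK⟩ := exists_cone_of_notMem_tangentConeSet hwX
  refine ⟨w, ?_, K, by simpa using hK⟩
  rintro rfl
  exact hwX (zero_mem_tangentConeSet h0)

lemma exists_prod_equiv_of_ne_zero {v : E} (hv : v ≠ 0) :
    ∃ (F : Submodule ℂ E) (e : (F × ℂ) ≃L[ℂ] E), ∀ q, e q = q.1 + q.2 • v := by
  obtain ⟨ℓ, hℓ⟩ := SeparatingDual.exists_eq_one (R := ℂ) hv
  let e := ContinuousLinearEquiv.equivOfRightInverse ℓ (ContinuousLinearMap.toSpanSingleton ℂ v)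
    fun t => by simp [hℓ]
  refine ⟨_, (ContinuousLinearEquiv.prodComm ℂ _ ℂ).trans e.symm, fun q => ?_⟩
  simp [e, add_comm]

-- `g` determines the terms of its power series only on the diagonal, so the low terms, which vanish
-- there, are replaced by zero.
lemma exists_hasFPowerSeriesAt_of_isBigO {g : E → ℂ} {x : E} {d : ℕ} (hg : AnalyticAt ℂ g x)
    (hO : (fun y => g (x + y)) =O[𝓝 0] fun y => ‖y‖ ^ d) :
    ∃ p : FormalMultilinearSeries ℂ E ℂ, HasFPowerSeriesAt g p x ∧ ∀ e < d, p e = 0 := by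
  obtain ⟨p, r, hr⟩ := hg
  have hlow : ∀ e < d, ∀ y, (p e fun _ => y) = 0 := fun e => by
    induction e using Nat.strong_induction_on with
    | _ e ih =>
      refine fun he => Asymptotics.IsBigO.continuousMultilinearMap_apply_eq_zero ?_
      have hpow : (fun y : E => ‖y‖ ^ d) =O[𝓝 0] fun y => ‖y‖ ^ (e + 1) := by
        refine Asymptotics.IsBigO.of_bound' ?_
        filter_upwards [Metric.closedBall_mem_nhds (0 : E) one_pos] with y hy
        rw [norm_pow, norm_pow, norm_norm]
        exact pow_le_pow_of_le_one (norm_nonneg y) (mem_closedBall_zero_iff.1 hy) he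
      refine ((hO.trans hpow).sub (isBigO_sub_initialPart hr.hasFPowerSeriesAt
        fun e' he' => ih e' he' (he'.trans he))).congr_left fun y => sub_sub_cancel _ _
  let p' : FormalMultilinearSeries ℂ E ℂ := fun e => if e < d then 0 else p e
  have hp'_apply : ∀ e y, (p' e fun _ => y) = p e fun _ => y := fun e y => by
    by_cases he : e < d <;> simp [p', he, hlow]
  have hp'_norm : ∀ e, ‖p' e‖ ≤ ‖p e‖ := fun e => by
    by_cases he : e < d <;> simp [p', he]
  refine ⟨p', ⟨r, hr.r_le.trans (FormalMultilinearSeries.radius_le_of_le hp'_norm), hr.r_pos,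
    fun hy => ?_⟩, fun e he => if_pos he⟩
  simpa only [hp'_apply] using hr.hasSum hy

end TangentCone

section Induction

variable {E F : Type*} [NormedAddCommGroup E] [NormedSpace ℂ E] [NormedAddCommGroup F]
  [NormedSpace ℂ F]

lemma commonZeros_preimage {α β : Type*} (φ : α → β) (S : Set (β → ℂ)) (U : Set β) :
    commonZeros ((· ∘ φ) '' S) (φ ⁻¹' U) = φ ⁻¹' commonZeros S U := by
  simp [commonZeros, preimage]

lemma analyticOnNhd_comp_of_mem_image {S : Set (F → ℂ)} {U : Set F}
    (hS : ∀ g ∈ S, AnalyticOnNhd ℂ g U) {φ : E → F} (hφ : ∀ x ∈ φ ⁻¹' U, AnalyticAt ℂ φ x) :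
    ∀ g ∈ (· ∘ φ) '' S, AnalyticOnNhd ℂ g (φ ⁻¹' U) := by
  rintro _ ⟨g, hg, rfl⟩ x hx
  exact (hS g hg _ hx).comp (hφ x hx)

lemma norm_le_of_cone_of_cone (L : F × ℂ →L[ℂ] E) {C K : ℝ} {y : F} {s t : ℂ}
    (hs : ‖s‖ ≤ K * ‖y‖) (ht : ‖t‖ ≤ C * ‖L (y, s)‖) :
    ‖t‖ ≤ |C| * (‖L‖ * (1 + |K|)) * ‖y‖ := by
  have hys : ‖(y, s)‖ ≤ (1 + |K|) * ‖y‖ := by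
    refine max_le ?_ (hs.trans ?_) <;> nlinarith [norm_nonneg y, le_abs_self K, abs_nonneg K]
  calc ‖t‖ ≤ |C| * ‖L (y, s)‖ := ht.trans (by gcongr; exact le_abs_self C)
    _ ≤ |C| * (‖L‖ * ((1 + |K|) * ‖y‖)) := by gcongr; exact L.le_opNorm_of_le hys
    _ = |C| * (‖L‖ * (1 + |K|)) * ‖y‖ := by ring

lemma exists_projection_of_cone (e : (F × ℂ) ≃L[ℂ] E) {U : Set (E × ℂ)} (hU : U ∈ 𝓝 0)
    {S : Set (E × ℂ → ℂ)} (hS : ∀ g ∈ S, AnalyticOnNhd ℂ g U) {C : ℝ}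
    (hcone : ∀ᶠ q in 𝓝 0, q ∈ commonZeros S U → ‖q.2‖ ≤ C * ‖q.1‖) {δ : E → ℂ}
    (hδ : AnalyticAt ℂ δ 0) {K : ℝ}
    (hδcone : ∀ᶠ q in 𝓝 0, δ (e q) = 0 → ‖q.2‖ ≤ K * ‖q.1‖) :
    ∃ V ∈ 𝓝 (0 : F × ℂ), ∃ T, (∀ g ∈ T, AnalyticOnNhd ℂ g V) ∧
      (∃ C' : ℝ, ∀ᶠ q in 𝓝 0, q ∈ commonZeros T V → ‖q.2‖ ≤ C' * ‖q.1‖) ∧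
      ∀ᶠ q in 𝓝 0, q ∈ commonZeros S U → δ q.1 = 0 →
        ((e.symm q.1).1, q.2) ∈ commonZeros T V := by
  let θ : ((F × ℂ) × ℂ) ≃L[ℂ] E × ℂ :=
    (ContinuousLinearEquiv.prodAssoc ℂ F ℂ ℂ).trans <|
      ((ContinuousLinearEquiv.refl ℂ F).prodCongr (.prodComm ℂ ℂ ℂ)).trans <|
        (ContinuousLinearEquiv.prodAssoc ℂ F ℂ ℂ).symm.trans (e.prodCongr (.refl ℂ ℂ))
  have hθ0 : Tendsto θ (𝓝 0) (𝓝 0) := θ.continuous.tendsto' 0 0 (map_zero θ)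
  have hθ0_symm : Tendsto θ.symm (𝓝 0) (𝓝 0) := θ.symm.continuous.tendsto' 0 0 (map_zero θ.symm)
  have hfst : Tendsto (Prod.fst : E × ℂ → E) (𝓝 0) (𝓝 0) := continuous_fst.tendsto 0
  have he_symm : Tendsto e.symm (𝓝 0) (𝓝 0) := e.symm.continuous.tendsto' 0 0 (map_zero e.symm)
  set W : Set (E × ℂ) := {q | q ∈ U ∧ AnalyticAt ℂ δ q.1 ∧
    (q ∈ commonZeros S U → ‖q.2‖ ≤ C * ‖q.1‖) ∧
    (δ q.1 = 0 → ‖(e.symm q.1).2‖ ≤ K * ‖(e.symm q.1).1‖)}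
  have hW : W ∈ 𝓝 0 := by
    filter_upwards [hU, hfst.eventually hδ.eventually_analyticAt, hcone,
      (he_symm.comp hfst).eventually hδcone] with q hq₁ hq₂ hq₃ hq₄
    exact ⟨hq₁, hq₂, hq₃, by simpa using hq₄⟩
  have hSW : ∀ g ∈ insert (fun q : E × ℂ => δ q.1) S, AnalyticOnNhd ℂ g W := by
    rintro g (rfl | hg) q hq
    · exact hq.2.1.comp_of_eq analyticAt_fst rfl
    · exact hS g hg q hq.1
  obtain ⟨ε, hε, T, hT, hTS, hST⟩ := exists_projection_commonZeros (hθ0 hW)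
    (analyticOnNhd_comp_of_mem_image hSW fun q _ => θ.toContinuousLinearMap.analyticAt q)
    (mem_image_of_mem _ (mem_insert _ S)) (not_eventually_of_cone hδcone)
  simp only [commonZeros_preimage, mem_preimage] at hTS hST
  refine ⟨Metric.ball 0 ε, Metric.ball_mem_nhds 0 hε, T, hT,
    ⟨|C| * (‖(e : F × ℂ →L[ℂ] E)‖ * (1 + |K|)), .of_forall fun z hz => ?_⟩, ?_⟩
  · obtain ⟨s, ⟨hsU, -, hsC, hsK⟩, hs⟩ := hTS z hz
    rw [forall_mem_insert] at hs
    exact norm_le_of_cone_of_cone (e : F × ℂ →L[ℂ] E) (by simpa [θ] using hsK hs.1)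
      (hsC ⟨hsU, hs.2⟩)
  · filter_upwards [hθ0_symm.eventually hST, hW] with q hq hqW hqS hδq
    rw [θ.apply_symm_apply] at hq
    exact hq ⟨hqW, forall_mem_insert.2 ⟨hδq, hqS.2⟩⟩

lemma exists_isRegularOfOrder_eq_zero_on_commonZeros [FiniteDimensional ℂ E] {U : Set (E × ℂ)}
    (hU : U ∈ 𝓝 0) {S : Set (E × ℂ → ℂ)} (hS : ∀ g ∈ S, AnalyticOnNhd ℂ g U) {C : ℝ}
    (hcone : ∀ᶠ q in 𝓝 0, q ∈ commonZeros S U → ‖q.2‖ ≤ C * ‖q.1‖) :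
    ∃ G d, IsRegularOfOrder G d ∧ ∀ᶠ q in 𝓝 (0 : E × ℂ), q ∈ commonZeros S U → G q = 0 := by
  induction hn : Module.finrank ℂ E using Nat.strong_induction_on generalizing E C with
  | _ n ih =>
    obtain ⟨m, Q, δ, hQ, hδ, hδ_ne, hQδ⟩ := exists_isRegularOfOrder_of_cone hU hS hcone
    rcases ne_or_eq (δ 0) 0 with h0 | h0
    · refine ⟨Q, m, hQ, ?_⟩
      have hδ0 : ∀ᶠ q : E × ℂ in 𝓝 0, δ q.1 ≠ 0 :=
        (continuous_fst.tendsto (0 : E × ℂ)).eventually (hδ.continuousAt.eventually_ne h0)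
      filter_upwards [hQδ, hδ0] with q hq hδq hqS
      exact (hq hqS).resolve_right hδq
    · obtain ⟨w, hw, K, hK⟩ := exists_cone_of_not_eventually_eq_zero hδ hδ_ne h0
      obtain ⟨F, e, he⟩ := exists_prod_equiv_of_ne_zero hw
      have hδcone : ∀ᶠ q in 𝓝 (0 : F × ℂ), δ (e q) = 0 → ‖q.2‖ ≤ K * ‖q.1‖ := by
        have hincl := (F.subtypeL.prodMap (.id ℂ ℂ)).continuous.tendsto' 0 0 (map_zero _)
        simpa [he] using hincl.eventually hK
      have hfinrank : Module.finrank ℂ F < n := by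
        rw [← hn, ← e.toLinearEquiv.finrank_eq, Module.finrank_prod, Module.finrank_self]
        exact Nat.lt_succ_self _
      obtain ⟨V, hV, T, hT, ⟨C', hC'⟩, hproj⟩ :=
        exists_projection_of_cone e hU hS hcone hδ hδcone
      obtain ⟨G, d, hG, hGT⟩ := ih _ hfinrank hV hT hC' rfl
      let π : E →L[ℂ] F := (ContinuousLinearMap.fst ℂ F ℂ).comp (e.symm : E →L[ℂ] F × ℂ)
      refine ⟨_, m + d, hQ.mul (hG.comp_clm π), ?_⟩
      have hπ := (π.prodMap (.id ℂ ℂ)).continuous.tendsto' 0 0 (map_zero _)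
      filter_upwards [hQδ, hproj, hπ.eventually hGT] with q hq hqT hqG hqS
      rcases hq hqS with hQq | hδq
      · exact mul_eq_zero_of_left hQq _
      · exact mul_eq_zero_of_right _ (hqG (hqT hqS hδq))

end Induction

section InitialParts

variable {E : Type*} [NormedAddCommGroup E] [NormedSpace ℂ E] {X U : Set E} {S : Set (E → ℂ)}
  {x v : E}

lemma exists_analyticAt_of_notMem_tangentConeSet [FiniteDimensional ℂ E] (hU : U ∈ 𝓝 x)
    (hS : ∀ g ∈ S, AnalyticOnNhd ℂ g U) (hXU : X ∩ U = commonZeros S U) (hx : x ∈ X)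
    (hv : v ∉ tangentConeSet X x) :
    ∃ (g : E → ℂ) (d : ℕ), AnalyticAt ℂ g x ∧ (∀ᶠ y in 𝓝 x, y ∈ X → g y = 0) ∧
      ((fun y => g (x + y)) =O[𝓝 0] fun y => ‖y‖ ^ d) ∧
      ∀ᶠ t in 𝓝 (0 : ℂ), ‖t‖ ^ d ≤ ‖g (x + t • v)‖ := by
  have hv0 : v ≠ 0 := fun h => hv (h ▸ zero_mem_tangentConeSet hx)
  obtain ⟨F, e, he⟩ := exists_prod_equiv_of_ne_zero hv0
  obtain ⟨C, hC⟩ := exists_cone_of_notMem_tangentConeSet hv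
  let φ : F × ℂ → E := fun q => x + e q
  have hφ : Tendsto φ (𝓝 0) (𝓝 x) :=
    (continuous_const.add e.continuous).tendsto' 0 x (by simp)
  have hcone : ∀ᶠ q in 𝓝 0, q ∈ commonZeros ((· ∘ φ) '' S) (φ ⁻¹' U) → ‖q.2‖ ≤ C * ‖q.1‖ := by
    have hincl := (F.subtypeL.prodMap (.id ℂ ℂ)).continuous.tendsto' 0 0 (map_zero _)
    filter_upwards [hincl.eventually hC] with q hq hqS
    rw [commonZeros_preimage, ← hXU] at hqS
    exact hq (by simpa [φ, he] using hqS.1)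
  obtain ⟨G, d, hG, hGS⟩ := exists_isRegularOfOrder_eq_zero_on_commonZeros (hφ hU)
    (analyticOnNhd_comp_of_mem_image hS fun q _ =>
      analyticAt_const.add (e.toContinuousLinearMap.analyticAt q)) hcone
  have he_symm : Tendsto e.symm (𝓝 0) (𝓝 0) := e.symm.continuous.tendsto' 0 0 (map_zero _)
  refine ⟨fun z => G (e.symm (z - x)), d, ?_, ?_, ?_, ?_⟩
  · refine hG.analyticAt.comp_of_eq ?_ (by simp)
    exact (e.symm.toContinuousLinearMap.analyticAt _).comp (analyticAt_id.sub analyticAt_const)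
  · filter_upwards [(he_symm.comp (tendsto_sub_nhds_zero_iff.2 tendsto_id)).eventually hGS, hU]
      with y hy hyU hyX
    refine hy ?_
    rw [commonZeros_preimage, ← hXU]
    simpa [φ] using ⟨hyX, hyU⟩
  · simp only [add_sub_cancel_left]
    exact (hG.isBigO.comp_tendsto he_symm).trans
      ((e.symm.toContinuousLinearMap.isBigO_id _).norm_left.norm_right.pow d)
  · filter_upwards [hG.le_norm] with t ht
    have hev : e.symm (t • v) = (0, t) := e.symm_apply_eq.2 (by simp [he])
    simpa [hev] using ht

lemma apply_ne_zero_of_le_norm {g : E → ℂ} {p : FormalMultilinearSeries ℂ E ℂ} {d : ℕ}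
    (hg : HasFPowerSeriesAt g p x) (hp : ∀ e < d, ∀ y, (p e fun _ => y) = 0)
    (hgv : ∀ᶠ t in 𝓝 (0 : ℂ), ‖t‖ ^ d ≤ ‖g (x + t • v)‖) : (p d fun _ => v) ≠ 0 := by
  have htv : Tendsto (fun t : ℂ => t • v) (𝓝[≠] 0) (𝓝 0) := by
    have hcont : Continuous fun t : ℂ => t • v := by fun_prop
    exact (hcont.tendsto' 0 0 (zero_smul ℂ v)).mono_left nhdsWithin_le_nhds
  have hinv : Tendsto (fun t : ℂ => t⁻¹ • t • v) (𝓝[≠] 0) (𝓝 v) :=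
    tendsto_const_nhds.congr' <| by
      filter_upwards [self_mem_nhdsWithin] with t ht
      exact (inv_smul_smul₀ ht v).symm
  have hlim := (tendsto_pow_mul_of_tendsto_smul hg hp htv hinv).norm
  refine norm_pos_iff.1 (one_pos.trans_le (ge_of_tendsto hlim ?_))
  filter_upwards [self_mem_nhdsWithin, hgv.filter_mono nhdsWithin_le_nhds] with t ht htg
  have ht' : 0 < ‖t‖ ^ d := pow_pos (norm_pos_iff.2 ht) d
  rwa [inv_pow, norm_mul, norm_inv, norm_pow, le_inv_mul_iff₀ ht', mul_one]

theorem tangent_cone_eq_zero_set_of_initial_parts_general {E : Type*} [NormedAddCommGroup E]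
    [NormedSpace ℂ E] [FiniteDimensional ℂ E] {X U : Set E} {x : E} (hU : U ∈ 𝓝 x)
    {S : Set (E → ℂ)} (hS : ∀ g ∈ S, AnalyticOnNhd ℂ g U) (hXU : X ∩ U = commonZeros S U)
    (hx : x ∈ X) :
    tangentConeSet X x =
      {v : E | ∀ (g : E → ℂ) (p : FormalMultilinearSeries ℂ E ℂ) (d : ℕ),
        HasFPowerSeriesAt g p x → (∀ᶠ y in 𝓝 x, y ∈ X → g y = 0) →
        (∀ e < d, p e = 0) → (p d fun _ => v) = 0} := by
  refine Subset.antisymm (fun v hv g p d hg hgX hp => ?_) fun v hv => ?_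
  · exact apply_eq_zero_of_mem_tangentConeSet hg (fun e he y => by simp [hp e he]) hgX hv
  · by_contra hvX
    obtain ⟨g, d, hg, hgX, hO, hgv⟩ := exists_analyticAt_of_notMem_tangentConeSet hU hS hXU hx hvX
    obtain ⟨p, hp, hlow⟩ := exists_hasFPowerSeriesAt_of_isBigO hg hO
    exact apply_ne_zero_of_le_norm hp (fun e he y => by simp [hlow e he]) hgv (hv g p d hp hgX hlow)

end InitialParts

/-- **Theorem (statement 13).** For a complex analytic set `X` and `x ∈ X`, the tangent
cone `C(X,x)` is the common zero set of the initial parts (lowest-degree homogeneous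
terms of the Taylor expansions at `x`) of all holomorphic germs vanishing on `X`
near `x`. -/
theorem tangent_cone_eq_zero_set_of_initial_parts (N : ℕ) (X Ω : Set (Cn N)) (x : Cn N)
    (hX : IsAnalyticSetIn X Ω) (hxΩ : x ∈ Ω) (hxX : x ∈ X) :
    tangentConeSet X x =
      {v : Cn N | ∀ (g : Cn N → ℂ) (p : FormalMultilinearSeries ℂ (Cn N) ℂ) (d : ℕ),
        HasFPowerSeriesAt g p x → (∀ᶠ y in 𝓝 x, y ∈ X → g y = 0) →
        (∀ e < d, p e = 0) → (p d fun _ => v) = 0} := by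
  obtain ⟨U, hU, hxU, -, S, hS, hXU⟩ := hX.2.2.2 x hxΩ
  exact tangent_cone_eq_zero_set_of_initial_parts_general (hU.mem_nhds hxU) hS hXU hxX
end
end

section
/- Let f : (ℂⁿ,0) → (ℂⁿ⁺¹,0) be a finite holomorphic map germ and for k ≥ 0 set Σ̂ᵏ(f) = {x ∈ ℂⁿ : corank df_x ≥ k}, where corank df_x = n − rank df_x. Then dim Σ̂ᵏ(f) ≤ n − k. -/
open Filter Topology Set

noncomputable section

instance germAlgebra {α : Type*} (l : Filter α) : Algebra ℂ (Filter.Germ l ℂ) :=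
  Algebra.ofModule
    (fun r x y => by
      induction x using Filter.Germ.inductionOn with | _ f =>
      induction y using Filter.Germ.inductionOn with | _ g =>
      rw [← Filter.Germ.coe_smul, ← Filter.Germ.coe_mul, ← Filter.Germ.coe_mul,
        ← Filter.Germ.coe_smul, smul_mul_assoc])
    (fun r x y => by
      induction x using Filter.Germ.inductionOn with | _ f =>
      induction y using Filter.Germ.inductionOn with | _ g =>
      rw [← Filter.Germ.coe_smul, ← Filter.Germ.coe_mul, ← Filter.Germ.coe_mul,
        ← Filter.Germ.coe_smul, mul_smul_comm])

/-- The local ℂ-algebra `𝒪_n` of germs at `0` of holomorphic functions on `ℂⁿ`. -/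
def Ogerm (n : ℕ) : Subalgebra ℂ (Filter.Germ (𝓝 (0 : Cn n)) ℂ) where
  carrier := {G | ∃ g : Cn n → ℂ, AnalyticAt ℂ g 0 ∧ (g : Filter.Germ (𝓝 (0 : Cn n)) ℂ) = G}
  mul_mem' := by rintro _ _ ⟨g, hg, rfl⟩ ⟨h, hh, rfl⟩; exact ⟨g * h, hg.mul hh, rfl⟩
  add_mem' := by rintro _ _ ⟨g, hg, rfl⟩ ⟨h, hh, rfl⟩; exact ⟨g + h, hg.add hh, rfl⟩
  algebraMap_mem' := fun c => ⟨fun _ => c, analyticAt_const, by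
    rw [Algebra.algebraMap_eq_smul_one, ← Filter.Germ.coe_one, ← Filter.Germ.coe_smul]
    congr 1
    funext x
    simp⟩

/-- The ideal `⟨f⟩` of `𝒪_n` generated by the coordinate functions of `f`. -/
def coordIdeal {n p : ℕ} (f : Cn n → Cn p) : Ideal (Ogerm n) :=
  Ideal.span {G : Ogerm n | ∃ i : Fin p,
    (G : Filter.Germ (𝓝 (0 : Cn n)) ℂ) =
      ((fun x => f x i : Cn n → ℂ) : Filter.Germ (𝓝 (0 : Cn n)) ℂ)}

/-- The multiplicity `mult f = dim_ℂ 𝒪ₙ/⟨f⟩` of a map germ. -/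
def multGerm {n p : ℕ} (f : Cn n → Cn p) : Cardinal :=
  Module.rank ℂ (Ogerm n ⧸ coordIdeal f)

/-- `f` is a finite map germ: `dim_ℂ 𝒪ₙ/f^*(𝔪_p)𝒪ₙ < ∞`. -/
def FiniteGerm {n p : ℕ} (f : Cn n → Cn p) : Prop :=
  multGerm f < Cardinal.aleph0

/-!
Modulo the ideal of a finite germ `f` each coordinate function is nilpotent, so near `0` there are
relations `x_i ^ m_i = ∑ j, a_ij * f_j` with `a_ij` analytic. On a small fibre `f = y` they become
relations `x_i ^ m_i = g_i(x)` with `g_i` small. Substituting them into a monomial that is divisible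
by some `x_i ^ m_i` shrinks the error by a factor `θ < 1`, so every monomial lies in the span of
the finitely many others. Hence the `x_i` are integral over `ℂ` as functions on the fibre, and the
fibre is finite.

Now parametrise analytic pieces by injective analytic maps `φ : V → ℂⁿ`, and bound the dimension of
the locus where `rank df ≤ r` by induction on `dim V`. If `rank df ≤ r` on a nonempty open part of
`V`, finiteness of the fibres forces `dim V ≤ r`. Otherwise the locus lies in the zero set of
an analytic function that is not identically zero, and countably many charts of level sets of lower
dimension cover it.
-/

section Monomials

variable {𝕜 B ι : Type*} [NontriviallyNormedField 𝕜] [NormedCommRing B] [NormedAlgebra 𝕜 B]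
  {X : ι → B} {r θ C : ℝ} {m : ι → ℕ} {P : Submodule 𝕜 B} {c : ι → List ι → 𝕜}

theorem norm_multiset_map_prod_le (hX : ∀ i, ‖X i‖ ≤ r) (s : Multiset ι) :
    ‖(s.map X).prod‖ ≤ ‖(1 : B)‖ * r ^ s.card := by
  induction s using Multiset.induction_on with
  | empty => simp
  | cons i s ih =>
    rw [Multiset.map_cons, Multiset.prod_cons, Multiset.card_cons, pow_succ', mul_left_comm]
    exact (norm_mul_le _ _).trans
      (mul_le_mul (hX i) ih (norm_nonneg _) ((norm_nonneg _).trans (hX i)))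

theorem norm_mkQL_multiset_map_prod_le_mul [DecidableEq ι] (hr : 0 ≤ r) (hθ : 0 ≤ θ)
    (hP : ∀ s : Multiset ι, (∀ i, s.count i < m i) → (s.map X).prod ∈ P)
    (hc : ∀ i, ∃ T ≤ θ * r ^ m i, HasSum (fun w ↦ ‖c i w‖ * r ^ w.length) T)
    (hX : ∀ i, HasSum (fun w ↦ c i w • (w.map X).prod) (X i ^ m i)) (hC : 0 ≤ C)
    (hle : ∀ s : Multiset ι, ‖P.mkQL (s.map X).prod‖ ≤ C * r ^ s.card) (s : Multiset ι) :
    ‖P.mkQL (s.map X).prod‖ ≤ θ * C * r ^ s.card := by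
  by_cases hs : ∀ i, s.count i < m i
  · have : P.mkQL (s.map X).prod = 0 := by simpa using hP s hs
    rw [this, norm_zero]
    positivity
  push Not at hs
  obtain ⟨i, hi⟩ := hs
  obtain ⟨t, rfl⟩ := Multiset.le_iff_exists_add.mp (Multiset.le_count_iff_replicate_le.mp hi)
  obtain ⟨T, hT, hcT⟩ := hc i
  have hexp : HasSum (fun w : List ι ↦ c i w • P.mkQL (((w : Multiset ι) + t).map X).prod)
      (P.mkQL ((Multiset.replicate (m i) i + t).map X).prod) := by
    simpa using ((hX i).mul_right (t.map X).prod).mapL P.mkQL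
  have hterm (w : List ι) : ‖c i w • P.mkQL (((w : Multiset ι) + t).map X).prod‖ ≤
      C * r ^ t.card * (‖c i w‖ * r ^ w.length) := by
    calc _ ≤ ‖c i w‖ * (C * r ^ ((w : Multiset ι) + t).card) := by
          rw [norm_smul]; gcongr; exact hle _
      _ = _ := by rw [Multiset.card_add, Multiset.coe_card, pow_add]; ring
  calc ‖P.mkQL ((Multiset.replicate (m i) i + t).map X).prod‖
      ≤ C * r ^ t.card * T := hexp.norm_le_of_bounded (hcT.mul_left _) hterm
    _ ≤ C * r ^ t.card * (θ * r ^ m i) := by gcongr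
    _ = θ * C * r ^ (Multiset.replicate (m i) i + t).card := by
      rw [Multiset.card_add, Multiset.card_replicate, pow_add]; ring

theorem multiset_map_prod_mem_of_hasSum_pow [DecidableEq ι] (hPc : IsClosed (P : Set B))
    (hr : 0 ≤ r) (hθ₀ : 0 ≤ θ) (hθ₁ : θ < 1) (hXr : ∀ i, ‖X i‖ ≤ r)
    (hP : ∀ s : Multiset ι, (∀ i, s.count i < m i) → (s.map X).prod ∈ P)
    (hc : ∀ i, ∃ T ≤ θ * r ^ m i, HasSum (fun w ↦ ‖c i w‖ * r ^ w.length) T)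
    (hX : ∀ i, HasSum (fun w ↦ c i w • (w.map X).prod) (X i ^ m i)) (s : Multiset ι) :
    (s.map X).prod ∈ P := by
  have : IsClosed (P : Set B) := hPc
  have hle (N : ℕ) (s : Multiset ι) :
      ‖P.mkQL (s.map X).prod‖ ≤ θ ^ N * ‖(1 : B)‖ * r ^ s.card := by
    induction N generalizing s with
    | zero =>
      simpa using (Submodule.Quotient.norm_mk_le P _).trans (norm_multiset_map_prod_le hXr s)
    | succ N ih =>
      simpa only [pow_succ', mul_assoc] using
        norm_mkQL_multiset_map_prod_le_mul hr hθ₀ hP hc hX (by positivity) ih s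
  have hlim : Tendsto (fun N : ℕ ↦ θ ^ N * ‖(1 : B)‖ * r ^ s.card) atTop (𝓝 0) := by
    simpa using ((tendsto_pow_atTop_nhds_zero_of_lt_one hθ₀ hθ₁).mul_const _).mul_const _
  have hz : P.mkQL (s.map X).prod = 0 :=
    norm_le_zero_iff.mp (ge_of_tendsto' hlim fun N ↦ hle N s)
  simpa using hz

theorem isIntegral_of_hasSum_pow [CompleteSpace 𝕜] [Finite ι] (hr : 0 ≤ r)
    (hθ₀ : 0 ≤ θ) (hθ₁ : θ < 1) (hXr : ∀ i, ‖X i‖ ≤ r)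
    (hc : ∀ i, ∃ T ≤ θ * r ^ m i, HasSum (fun w ↦ ‖c i w‖ * r ^ w.length) T)
    (hX : ∀ i, HasSum (fun w ↦ c i w • (w.map X).prod) (X i ^ m i)) (i : ι) :
    IsIntegral 𝕜 (X i) := by
  classical
  have := Fintype.ofFinite ι
  let S : Set (Multiset ι) := {s | ∀ i, s.count i < m i}
  have hS : S.Finite := (Set.finite_Iic (∑ i, Multiset.replicate (m i) i)).subset fun s hs ↦
    Multiset.le_iff_count.mpr fun i ↦ by
      simpa [Multiset.count_sum', Multiset.count_replicate] using (hs i).le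
  let P := Submodule.span 𝕜 ((fun s : Multiset ι ↦ (s.map X).prod) '' S)
  have hPfin : FiniteDimensional 𝕜 P := FiniteDimensional.span_of_finite 𝕜 (hS.image _)
  have hmem := multiset_map_prod_mem_of_hasSum_pow P.closed_of_finiteDimensional hr hθ₀ hθ₁ hXr
    (fun s hs ↦ Submodule.subset_span (mem_image_of_mem _ hs)) hc hX
  have hpow (k : ℕ) : X i ^ k ∈ P := by simpa using hmem (Multiset.replicate k i)
  have hle : Subalgebra.toSubmodule (Algebra.adjoin 𝕜 {X i}) ≤ P := by
    rw [Algebra.adjoin_eq_span, Submodule.span_le]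
    intro x hx
    obtain ⟨k, rfl⟩ := Submonoid.mem_closure_singleton.mp hx
    exact hpow k
  have := Submodule.finiteDimensional_of_le hle
  exact .of_mem_of_fg _ (Module.Finite.iff_fg.mp this) _ (Algebra.self_mem_adjoin_singleton 𝕜 (X i))

end Monomials

section PowerSeries

variable {𝕜 ι κ : Type*} [NontriviallyNormedField 𝕜] {r θ : ℝ}

/-- On the polydisc of polyradius `r`, the function `g` is the sum of a power series in the
coordinates whose weighted `ℓ¹` norm `∑ ‖c_w‖ r ^ |w|` is at most `M`. The terms are indexed by
words rather than by multi-indices, so that the values of multilinear maps on the vectors of a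
basis can serve as coefficients; different words may stand for the same monomial. -/
def HasPowerSeriesNormLE (g : (ι → 𝕜) → 𝕜) (r M : ℝ) : Prop :=
  ∃ c : List ι → 𝕜, (∃ T ≤ M, HasSum (fun w ↦ ‖c w‖ * r ^ w.length) T) ∧
    ∀ x : ι → 𝕜, (∀ i, ‖x i‖ ≤ r) → HasSum (fun w ↦ c w * (w.map x).prod) (g x)

theorem HasPowerSeriesNormLE.mono {g : (ι → 𝕜) → 𝕜} {M M' : ℝ} (hg : HasPowerSeriesNormLE g r M)
    (hM : M ≤ M') : HasPowerSeriesNormLE g r M' := by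
  obtain ⟨c, ⟨T, hT, hc⟩, hcg⟩ := hg
  exact ⟨c, ⟨T, hT.trans hM, hc⟩, hcg⟩

theorem HasPowerSeriesNormLE.sum_mul [Fintype κ] {g : κ → (ι → 𝕜) → 𝕜} {M : κ → ℝ} (hr : 0 ≤ r)
    (hg : ∀ j, HasPowerSeriesNormLE (g j) r (M j)) (y : κ → 𝕜) :
    HasPowerSeriesNormLE (fun x ↦ ∑ j, y j * g j x) r (∑ j, ‖y j‖ * M j) := by
  choose c hc hcg using hg
  choose T hT hcT using hc
  have hle (w : List ι) :
      ‖∑ j, y j * c j w‖ * r ^ w.length ≤ ∑ j, ‖y j‖ * (‖c j w‖ * r ^ w.length) := by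
    simp_rw [← mul_assoc, ← norm_mul, ← Finset.sum_mul]
    gcongr
    exact norm_sum_le _ _
  have hmaj : HasSum (fun w ↦ ∑ j, ‖y j‖ * (‖c j w‖ * r ^ w.length)) (∑ j, ‖y j‖ * T j) :=
    hasSum_sum fun j _ ↦ (hcT j).mul_left _
  have hsum : Summable fun w ↦ ‖∑ j, y j * c j w‖ * r ^ w.length :=
    .of_nonneg_of_le (fun w ↦ by positivity) hle hmaj.summable
  refine ⟨fun w ↦ ∑ j, y j * c j w, ⟨_, ?_, hsum.hasSum⟩, fun x hx ↦ ?_⟩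
  · calc _ ≤ ∑ j, ‖y j‖ * T j := hasSum_le hle hsum.hasSum hmaj
      _ ≤ ∑ j, ‖y j‖ * M j := by gcongr with j; exact hT j
  · simpa only [Finset.sum_mul, mul_assoc] using
      hasSum_sum fun j (_ : j ∈ Finset.univ) ↦ (hcg j x hx).mul_left (y j)

section Analytic

variable {E : Type*} [NormedAddCommGroup E] [NormedSpace 𝕜 E] [Fintype ι]
  {a : E → 𝕜} {p : FormalMultilinearSeries 𝕜 E 𝕜} {R : ENNReal}

theorem summable_norm_apply_mul_pow (e : ι → E) (hr : 0 ≤ r)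
    (hR : ENNReal.ofReal (r * ∑ i, ‖e i‖) < p.radius) :
    Summable fun s : Σ k, Fin k → ι ↦ ‖p s.1 (e ∘ s.2)‖ * r ^ s.1 := by
  rw [summable_sigma_of_nonneg fun s ↦ by positivity]
  refine ⟨fun k ↦ .of_finite, .of_nonneg_of_le (fun k ↦ tsum_nonneg fun w ↦ by positivity)
    (fun k ↦ ?_) (p.summable_norm_mul_pow hR)⟩
  rw [tsum_fintype, Real.coe_toNNReal _ (by positivity)]
  calc ∑ w : Fin k → ι, ‖p k (e ∘ w)‖ * r ^ k
      ≤ ∑ w : Fin k → ι, ‖p k‖ * (∏ l, ‖e (w l)‖) * r ^ k := by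
        gcongr with w
        exact (p k).le_opNorm _
    _ = ‖p k‖ * (r * ∑ i, ‖e i‖) ^ k := by
        rw [← Finset.sum_mul, ← Finset.mul_sum, ← Fintype.sum_pow fun i ↦ ‖e i‖, mul_pow]
        ring

theorem hasSum_apply_mul_prod [CompleteSpace 𝕜] (hp : HasFPowerSeriesOnBall a p 0 R) (e : ι → E)
    (hr : 0 ≤ r) (hR : ENNReal.ofReal (r * ∑ i, ‖e i‖) < R) {x : ι → 𝕜} (hx : ∀ i, ‖x i‖ ≤ r) :
    HasSum (fun s : Σ k, Fin k → ι ↦ p s.1 (e ∘ s.2) * ∏ l, x (s.2 l)) (a (∑ i, x i • e i)) := by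
  have hmem : ∑ i, x i • e i ∈ Metric.eball (0 : E) R := by
    rw [Metric.mem_eball, edist_zero_right, ← ofReal_norm]
    refine (ENNReal.ofReal_le_ofReal ?_).trans_lt hR
    rw [Finset.mul_sum]
    refine norm_sum_le_of_le _ fun i _ ↦ ?_
    rw [norm_smul]
    gcongr
    exact hx i
  have hsum : Summable fun s : Σ k, Fin k → ι ↦ p s.1 (e ∘ s.2) * ∏ l, x (s.2 l) := by
    refine .of_norm_bounded (summable_norm_apply_mul_pow e hr (hR.trans_le hp.r_le)) fun s ↦ ?_
    rw [norm_mul, norm_prod]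
    gcongr
    exact (Finset.prod_le_prod (fun _ _ ↦ norm_nonneg _) fun l _ ↦ hx (s.2 l)).trans_eq (by simp)
  have hterm (k : ℕ) : ∑ w : Fin k → ι, p k (e ∘ w) * ∏ l, x (w l) =
      p k fun _ ↦ ∑ i, x i • e i := by
    rw [(p k).map_sum]
    exact Finset.sum_congr rfl fun w _ ↦ by
      rw [(p k).map_smul_univ, smul_eq_mul, mul_comm, Function.comp_def]
  have heq := (hsum.hasSum.sigma fun k ↦ hasSum_fintype _).unique
    (by simpa only [hterm, zero_add] using hp.hasSum hmem)
  exact heq ▸ hsum.hasSum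

theorem exists_hasPowerSeriesNormLE [CompleteSpace 𝕜] (hp : HasFPowerSeriesOnBall a p 0 R)
    (e : ι → E) (hr : 0 ≤ r) (hR : ENNReal.ofReal (r * ∑ i, ‖e i‖) < R) :
    ∃ M, HasPowerSeriesNormLE (fun x ↦ a (∑ i, x i • e i)) r M := by
  have hsm := (List.equivSigmaTuple (α := ι)).hasSum_iff.mpr
    (summable_norm_apply_mul_pow e hr (hR.trans_le hp.r_le)).hasSum
  refine ⟨_, fun w ↦ p w.length (e ∘ w.get), ⟨_, le_rfl, hsm⟩, fun x hx ↦ ?_⟩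
  have hword (w : List ι) : (w.map x).prod = ∏ l, x (w.get l) := by
    rw [← List.ofFn_getElem_eq_map, List.prod_ofFn]
    rfl
  have hsx := (List.equivSigmaTuple (α := ι)).hasSum_iff.mpr (hasSum_apply_mul_prod hp e hr hR hx)
  simp only [hword]
  exact hsx

theorem eventually_hasPowerSeriesNormLE [CompleteSpace 𝕜] (ha : AnalyticAt 𝕜 a 0) (e : ι → E) :
    ∀ᶠ r in 𝓝[>] (0 : ℝ), ∃ M, HasPowerSeriesNormLE (fun x ↦ a (∑ i, x i • e i)) r M := by
  obtain ⟨p, R, hp⟩ := ha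
  have hlim : Tendsto (fun r : ℝ ↦ ENNReal.ofReal (r * ∑ i, ‖e i‖)) (𝓝 0) (𝓝 0) := by
    simpa using ENNReal.tendsto_ofReal (tendsto_id.mul_const (∑ i, ‖e i‖) (x := 𝓝 0))
  filter_upwards [self_mem_nhdsWithin,
    (hlim.eventually_lt_const hp.r_pos).filter_mono nhdsWithin_le_nhds] with r hr hrR
  exact exists_hasPowerSeriesNormLE hp e (mem_Ioi.mp hr).le hrR

end Analytic

theorem finite_range_of_isIntegral {α K : Type*} [CommRing K] [IsDomain K] {f : α → K}
    (hf : IsIntegral K f) : (range f).Finite := by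
  obtain ⟨q, hq, hqf⟩ := hf
  refine (q.rootSet_finite K).subset ?_
  rintro _ ⟨a, rfl⟩
  refine (Polynomial.mem_rootSet_of_ne hq.ne_zero).mpr ?_
  have := Polynomial.aeval_algHom_apply (Pi.evalAlgHom K (fun _ : α ↦ K) a) f q
  rwa [Polynomial.aeval_def f, hqf, map_zero] at this

theorem finite_setOf_pow_eq [CompleteSpace 𝕜] [Finite ι] {m : ι → ℕ} {g : ι → (ι → 𝕜) → 𝕜}
    (hr : 0 ≤ r) (hθ₀ : 0 ≤ θ) (hθ₁ : θ < 1)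
    (hg : ∀ i, HasPowerSeriesNormLE (g i) r (θ * r ^ m i)) :
    {x : ι → 𝕜 | (∀ i, ‖x i‖ ≤ r) ∧ ∀ i, x i ^ m i = g i x}.Finite := by
  set K := {x : ι → 𝕜 | (∀ i, ‖x i‖ ≤ r) ∧ ∀ i, x i ^ m i = g i x}
  let X (i : ι) : BoundedContinuousFunction K 𝕜 :=
    .ofNormedAddCommGroup (fun x ↦ x.1 i)
      ((continuous_apply i).comp continuous_subtype_val) r fun x ↦ x.2.1 i
  have hXr (i : ι) : ‖X i‖ ≤ r :=
    BoundedContinuousFunction.norm_ofNormedAddCommGroup_le _ hr fun x ↦ x.2.1 i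
  choose c hc hcg using hg
  have hX (i : ι) : HasSum (fun w ↦ c i w • (w.map X).prod) (X i ^ m i) := by
    obtain ⟨T, -, hT⟩ := hc i
    have hsum : Summable fun w ↦ c i w • (w.map X).prod := by
      refine .of_norm_bounded (hT.summable.mul_left ‖(1 : BoundedContinuousFunction K 𝕜)‖)
        fun w ↦ ?_
      rw [norm_smul, mul_left_comm]
      gcongr
      simpa using norm_multiset_map_prod_le hXr (w : Multiset ι)
    refine hsum.hasSum_iff.mpr (BoundedContinuousFunction.ext fun x ↦ ?_)
    have hprod (w : List ι) : (w.map X).prod x = (w.map x.1).prod := by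
      induction w <;> simp_all [X]
    have hsumx := hsum.hasSum.mapL (BoundedContinuousFunction.evalCLM 𝕜 x)
    simp only [map_smul, BoundedContinuousFunction.evalCLM_apply, hprod, smul_eq_mul] at hsumx
    exact (hsumx.unique (hcg i x.1 x.2.1)).trans (x.2.2 i).symm
  have hint := isIntegral_of_hasSum_pow hr hθ₀ hθ₁ hXr hc hX
  have hfin (i : ι) : (range (X i)).Finite := finite_range_of_isIntegral
    ((hint i).map ((ContinuousMap.coeFnAlgHom 𝕜).comp
      (BoundedContinuousFunction.toContinuousMapₐ 𝕜)))
  exact (Set.Finite.pi' hfin).subset fun x hx i ↦ ⟨⟨x, hx⟩, rfl⟩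

theorem exists_nhds_finite_fibres_of_pow_eq_sum_mul [CompleteSpace 𝕜] {E : Type*}
    [NormedAddCommGroup E] [NormedSpace 𝕜 E] [Finite ι] [Fintype κ] (b : Module.Basis ι 𝕜 E)
    {m : ι → ℕ} {f : κ → E → 𝕜} (hf : ∀ j, Tendsto (f j) (𝓝 0) (𝓝 0)) {a : ι → κ → E → 𝕜}
    (ha : ∀ i j, AnalyticAt 𝕜 (a i j) 0)
    (h : ∀ i, ∀ᶠ x in 𝓝 0, b.repr x i ^ m i = ∑ j, a i j x * f j x) :
    ∃ W ∈ 𝓝 (0 : E), ∀ y : κ → 𝕜, {x ∈ W | ∀ j, f j x = y j}.Finite := by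
  have := Fintype.ofFinite ι
  have hev := eventually_all.mpr fun i ↦ eventually_all.mpr fun j ↦
    eventually_hasPowerSeriesNormLE (ha i j) b
  obtain ⟨r, har, hr⟩ := (hev.and self_mem_nhdsWithin).exists
  choose M hM using har
  let W : Set E := {x | (∀ i, ‖b.repr x i‖ < r) ∧ (∀ i, ∑ j, ‖f j x‖ * M i j < 1 / 2 * r ^ m i) ∧
    ∀ i, b.repr x i ^ m i = ∑ j, a i j x * f j x}
  have hW : W ∈ 𝓝 0 := by
    have hcoord (i : ι) : Tendsto (fun x ↦ ‖b.repr x i‖) (𝓝 0) (𝓝 0) := by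
      simpa using ((continuous_apply i).comp b.equivFunL.continuous).norm.tendsto 0
    have hsum (i : ι) : Tendsto (fun x ↦ ∑ j, ‖f j x‖ * M i j) (𝓝 0) (𝓝 0) := by
      simpa using tendsto_finsetSum Finset.univ fun j _ ↦ (hf j).norm.mul_const (M i j)
    exact (eventually_all.mpr fun i ↦ (hcoord i).eventually_lt_const hr).and
      ((eventually_all.mpr fun i ↦ (hsum i).eventually_lt_const (by positivity)).and
        (eventually_all.mpr h))
  refine ⟨W, hW, fun y ↦ ?_⟩
  rcases {x ∈ W | ∀ j, f j x = y j}.eq_empty_or_nonempty with he | ⟨x₀, ⟨-, hx₀, -⟩, hy⟩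
  · rw [he]
    exact finite_empty
  have hg (i : ι) : HasPowerSeriesNormLE (fun x ↦ ∑ j, y j * a i j (∑ i, x i • b i)) r
      (1 / 2 * r ^ m i) :=
    (HasPowerSeriesNormLE.sum_mul hr.le (hM i) y).mono (by simpa only [hy] using (hx₀ i).le)
  refine ((finite_setOf_pow_eq hr.le (by norm_num) (by norm_num) hg).preimage
    b.equivFun.injective.injOn).subset fun x ⟨⟨hxr, _, hx⟩, hxy⟩ ↦ ⟨fun i ↦ (hxr i).le, fun i ↦ ?_⟩
  simpa [b.sum_repr, ← hxy, mul_comm] using hx i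

end PowerSeries

theorem exists_pow_mem_of_mem_jacobson_bot {K A : Type*} [Field K] [CommRing A] [Algebra K A]
    {I : Ideal A} (hI : Module.rank K (A ⧸ I) < Cardinal.aleph0) {x : A}
    (hx : x ∈ Ideal.jacobson (⊥ : Ideal A)) : ∃ m : ℕ, x ^ m ∈ I := by
  have : Module.Finite K (A ⧸ I) := Module.rank_lt_aleph0_iff.mp hI
  have : IsArtinianRing (A ⧸ I) := .of_finite K _
  have hmk : Ideal.Quotient.mk I x ∈ Ideal.jacobson (⊥ : Ideal (A ⧸ I)) := by
    rw [Ideal.mem_jacobson_bot] at hx ⊢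
    intro y
    obtain ⟨y, rfl⟩ := Ideal.Quotient.mk_surjective y
    simpa using (hx y).map (Ideal.Quotient.mk I)
  obtain ⟨m, hm⟩ := IsArtinianRing.isNilpotent_jacobson_bot (R := A ⧸ I)
  refine ⟨m, Ideal.Quotient.eq_zero_iff_mem.mp ?_⟩
  simpa [hm] using Ideal.pow_mem_pow hmk m

namespace Ogerm

variable {n : ℕ} {g : Cn n → ℂ}

/-- The germ at `0` of an analytic function, as an element of `𝒪_n`. -/
def mk (g : Cn n → ℂ) (hg : AnalyticAt ℂ g 0) : Ogerm n := ⟨g, g, hg, rfl⟩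

theorem exists_eq_mk (G : Ogerm n) : ∃ g, ∃ hg : AnalyticAt ℂ g 0, G = mk g hg := by
  obtain ⟨_, g, hg, rfl⟩ := G
  exact ⟨g, hg, rfl⟩

theorem mk_eq_mk_iff {h : Cn n → ℂ} (hg : AnalyticAt ℂ g 0) (hh : AnalyticAt ℂ h 0) :
    mk g hg = mk h hh ↔ g =ᶠ[𝓝 0] h :=
  Subtype.ext_iff.trans Filter.Germ.coe_eq

theorem isUnit_mk (hg : AnalyticAt ℂ g 0) (hg0 : g 0 ≠ 0) : IsUnit (mk g hg) := by
  refine IsUnit.of_mul_eq_one (mk g⁻¹ (hg.inv hg0)) ((mk_eq_mk_iff (hg.mul (hg.inv hg0))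
    analyticAt_const).mpr ?_)
  filter_upwards [hg.continuousAt.eventually_ne hg0] with x hx
  exact mul_inv_cancel₀ hx

theorem mk_mem_jacobson_bot (hg : AnalyticAt ℂ g 0) (hg0 : g 0 = 0) :
    mk g hg ∈ Ideal.jacobson (⊥ : Ideal (Ogerm n)) := by
  refine Ideal.mem_jacobson_bot.mpr fun H ↦ ?_
  obtain ⟨h, hh, rfl⟩ := exists_eq_mk H
  exact isUnit_mk ((hg.mul hh).add analyticAt_const) (by simp [hg0])

variable {p : ℕ} {f : Cn n → Cn p}

theorem exists_eventuallyEq_sum_mul (hf : AnalyticAt ℂ f 0) (hg : AnalyticAt ℂ g 0)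
    (h : mk g hg ∈ coordIdeal f) :
    ∃ a : Fin p → Cn n → ℂ, (∀ j, AnalyticAt ℂ (a j) 0) ∧
      ∀ᶠ x in 𝓝 0, g x = ∑ j, a j x * f x j := by
  have hfj (j : Fin p) : AnalyticAt ℂ (fun x ↦ f x j) 0 :=
    ((EuclideanSpace.proj j : Cn p →L[ℂ] ℂ).analyticAt _).comp hf
  have hspan : coordIdeal f = Ideal.span (range fun j ↦ mk _ (hfj j)) :=
    congrArg Ideal.span <| Set.ext fun G ↦
      exists_congr fun j ↦ eq_comm.trans (Subtype.ext_iff (a1 := mk _ (hfj j))).symm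
  obtain ⟨c, hc⟩ := Ideal.mem_span_range_iff_exists_fun.mp (hspan ▸ h)
  choose a ha hac using fun j ↦ exists_eq_mk (c j)
  simp only [hac] at hc
  have hsum : (∑ j, mk (a j) (ha j) * mk _ (hfj j) : Ogerm n).val =
      ((∑ j, fun x ↦ a j x * f x j : Cn n → ℂ) : Filter.Germ (𝓝 (0 : Cn n)) ℂ) :=
    (map_sum (Ogerm n).val _ _).trans (map_sum (Filter.Germ.coeRingHom _) _ _).symm
  refine ⟨a, ha, ?_⟩
  filter_upwards [Filter.Germ.coe_eq.mp (hsum ▸ congrArg Subtype.val hc)] with x hx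
  rw [← hx, Finset.sum_apply]

end Ogerm

theorem exists_nhds_finite_fibres {n p : ℕ} {f : Cn n → Cn p} (hf0 : f 0 = 0)
    (hfa : AnalyticAt ℂ f 0) (hfin : FiniteGerm f) :
    ∃ W ∈ 𝓝 (0 : Cn n), ∀ y, {x ∈ W | f x = y}.Finite := by
  have hcoord (i : Fin n) : AnalyticAt ℂ (fun x : Cn n ↦ x i) 0 :=
    (EuclideanSpace.proj i : Cn n →L[ℂ] ℂ).analyticAt 0
  choose m hm using fun i ↦ exists_pow_mem_of_mem_jacobson_bot hfin
    (Ogerm.mk_mem_jacobson_bot (hcoord i) rfl)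
  choose a ha hax using fun i ↦ Ogerm.exists_eventuallyEq_sum_mul hfa ((hcoord i).pow (m i)) (hm i)
  have hfj (j : Fin p) : Tendsto (fun x ↦ f x j) (𝓝 0) (𝓝 0) := by
    simpa [Function.comp_def, hf0] using ((EuclideanSpace.proj j :
      Cn p →L[ℂ] ℂ).continuous.continuousAt.comp hfa.continuousAt).tendsto
  obtain ⟨W, hW, hfinite⟩ := exists_nhds_finite_fibres_of_pow_eq_sum_mul
    (EuclideanSpace.basisFun (Fin n) ℂ).toBasis hfj ha (by simpa using hax)
  exact ⟨W, hW, fun y ↦ (hfinite y).subset fun x hx ↦ ⟨hx.1, fun j ↦ congrArg (· j) hx.2⟩⟩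

section Charts

open Module Metric

variable {𝕜 E F : Type*} [RCLike 𝕜] [NormedAddCommGroup E] [NormedSpace 𝕜 E]
  [NormedAddCommGroup F] [NormedSpace 𝕜 F]

theorem analyticAt_symm_implicitToOpenPartialHomeomorph [CompleteSpace E]
    [FiniteDimensional 𝕜 F] {g : E → F} {v : E} {L : E →L[𝕜] F} (hg : AnalyticAt 𝕜 g v)
    (hL : HasStrictFDerivAt g L v) (hs : L.range = ⊤) :
    AnalyticAt 𝕜 (hL.implicitToOpenPartialHomeomorph g L hs).symm (g v, 0) := by
  have := FiniteDimensional.complete 𝕜 F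
  let φ := hL.implicitFunctionDataOfComplemented g L hs
    L.ker_closedComplemented_of_finiteDimensional_range
  have hright : AnalyticAt 𝕜 φ.rightFun v :=
    (φ.rightDeriv.analyticAt _).fun_comp (analyticAt_id.sub analyticAt_const)
  have hpt : φ.prodFun v = (g v, 0) := hL.implicitToOpenPartialHomeomorph_self hs
  exact hpt ▸ (φ.contDiffAt_implicitFunction (n := ⊤) hg.contDiffAt hright.contDiffAt
    (by simp)).analyticAt

theorem exists_levelSet_chart [CompleteSpace E] [FiniteDimensional 𝕜 F] {g : E → F} {v : E}
    {N : Set E} (hg : AnalyticAt 𝕜 g v) (hs : (fderiv 𝕜 g v).range = ⊤) (hN : N ∈ 𝓝 v) :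
    ∃ (χ : (fderiv 𝕜 g v).ker → E) (ε : ℝ), 0 < ε ∧ AnalyticOnNhd 𝕜 χ (ball 0 ε) ∧
      InjOn χ (ball 0 ε) ∧ MapsTo χ (ball 0 ε) (N ∩ g ⁻¹' {g v}) ∧
      χ '' ball 0 ε ∈ 𝓝[g ⁻¹' {g v}] v := by
  have := FiniteDimensional.complete 𝕜 F
  have hst : HasStrictFDerivAt g (fderiv 𝕜 g v) v := hg.hasStrictFDerivAt
  let e := hst.implicitToOpenPartialHomeomorph g _ hs
  have hev : e v = (g v, 0) := hst.implicitToOpenPartialHomeomorph_self hs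
  have hv : v ∈ e.source := hst.mem_implicitToOpenPartialHomeomorph_source hs
  have hsymm : AnalyticAt 𝕜 e.symm (g v, 0) :=
    analyticAt_symm_implicitToOpenPartialHomeomorph hg hst hs
  have hpt : Tendsto (fun t : (fderiv 𝕜 g v).ker ↦ (g v, t)) (𝓝 0) (𝓝 (g v, 0)) :=
    (Continuous.prodMk_right (g v)).tendsto 0
  have hχ : AnalyticAt 𝕜 (fun t : (fderiv 𝕜 g v).ker ↦ e.symm (g v, t)) 0 :=
    hsymm.comp (f := fun t ↦ (g v, t)) (analyticAt_const.prod analyticAt_id)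
  have hχN : ∀ᶠ t : (fderiv 𝕜 g v).ker in 𝓝 0, e.symm (g v, t) ∈ N :=
    hχ.continuousAt.eventually_mem <| by rwa [← hev, e.left_inv hv]
  have htarget : ∀ᶠ t in 𝓝 (0 : (fderiv 𝕜 g v).ker), (g v, t) ∈ e.target :=
    hpt.eventually_mem (e.open_target.mem_nhds (hev ▸ e.map_source hv))
  obtain ⟨ε, hε, hball⟩ := Metric.eventually_nhds_iff_ball.mp
    (htarget.and (hχ.eventually_analyticAt.and hχN))
  refine ⟨fun t ↦ e.symm (g v, t), ε, hε, fun t ht ↦ (hball t ht).2.1,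
    fun s hs t ht hst ↦ ?_, fun t ht ↦ ⟨(hball t ht).2.2, ?_⟩, ?_⟩
  · exact congrArg Prod.snd (e.symm.injOn (hball s hs).1 (hball t ht).1 hst)
  · exact congrArg Prod.fst (e.right_inv (hball t ht).1)
  · have hsnd : ∀ᶠ x in 𝓝 v, (e x).2 ∈ ball 0 ε :=
      (e.continuousAt hv).snd.eventually_mem (by simpa [hev] using ball_mem_nhds _ hε)
    filter_upwards [self_mem_nhdsWithin, mem_nhdsWithin_of_mem_nhds hsnd,
      mem_nhdsWithin_of_mem_nhds (e.open_source.mem_nhds hv)] with x hx hxε hxs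
    have hex : (g v, (e x).2) = e x := Prod.ext (mem_singleton_iff.mp hx).symm rfl
    exact ⟨(e x).2, hxε, (congrArg e.symm hex).trans (e.left_inv hxs)⟩

theorem exists_hypersurface_chart [FiniteDimensional 𝕜 E] {g : E → 𝕜} {v : E} {N : Set E}
    (hg : AnalyticAt 𝕜 g v) (hv : fderiv 𝕜 g v ≠ 0) (hN : N ∈ 𝓝 v) :
    finrank 𝕜 (fderiv 𝕜 g v).ker + 1 = finrank 𝕜 E ∧
      ∃ (χ : (fderiv 𝕜 g v).ker → E) (ε : ℝ), 0 < ε ∧ AnalyticOnNhd 𝕜 χ (ball 0 ε) ∧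
        InjOn χ (ball 0 ε) ∧ MapsTo χ (ball 0 ε) (N ∩ g ⁻¹' {g v}) ∧
        χ '' ball 0 ε ∈ 𝓝[g ⁻¹' {g v}] v := by
  have := FiniteDimensional.complete 𝕜 E
  have hv' : ((fderiv 𝕜 g v : E →L[𝕜] 𝕜) : Dual 𝕜 E) ≠ 0 := ContinuousLinearMap.coe_injective.ne hv
  exact ⟨Dual.finrank_ker_add_one_of_ne_zero hv',
    exists_levelSet_chart hg (LinearMap.range_eq_top.mpr (LinearMap.surjective hv')) hN⟩

theorem exists_dual_fderiv_comp_ne_zero {g : E → F} {v : E} (hg : DifferentiableAt 𝕜 g v)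
    (h : fderiv 𝕜 g v ≠ 0) : ∃ ℓ : StrongDual 𝕜 F, fderiv 𝕜 (ℓ ∘ g) v ≠ 0 := by
  obtain ⟨u, hu⟩ := DFunLike.ne_iff.mp h
  obtain ⟨ℓ, hℓ⟩ := SeparatingDual.exists_ne_zero (R := 𝕜) hu
  refine ⟨ℓ, fun h0 ↦ hℓ ?_⟩
  rw [← ContinuousLinearMap.comp_apply, ← (ℓ.hasFDerivAt.comp v hg.hasFDerivAt).fderiv, h0,
    zero_apply]

theorem exists_iteratedFDeriv_ne_zero [CompleteSpace F] {h : E → F} {w : E}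
    (hh : AnalyticAt 𝕜 h w) (hne : ¬ h =ᶠ[𝓝 w] 0) : ∃ j, iteratedFDeriv 𝕜 j h w ≠ 0 := by
  contrapose! hne
  obtain ⟨p, r, hp⟩ := hh
  filter_upwards [eball_mem_nhds w hp.r_pos] with y hy
  have hsum := hp.hasSum_iteratedFDeriv (y := y - w) (by simpa [edist_eq_enorm_sub] using hy)
  simpa [hne] using hsum.tsum_eq.symm

theorem exists_iteratedFDeriv_eq_zero_fderiv_ne_zero [CompleteSpace F] {h : E → F} {w : E}
    (hh : AnalyticAt 𝕜 h w) (hw : h w = 0) (hne : ¬ h =ᶠ[𝓝 w] 0) :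
    ∃ j, iteratedFDeriv 𝕜 j h w = 0 ∧ fderiv 𝕜 (iteratedFDeriv 𝕜 j h) w ≠ 0 := by
  classical
  have hex := exists_iteratedFDeriv_ne_zero hh hne
  have hzero : iteratedFDeriv 𝕜 0 h w = 0 := by ext; simp [hw]
  obtain ⟨j, hj⟩ := Nat.exists_eq_add_one.mpr ((Nat.find_pos hex).mpr (not_not.mpr hzero))
  refine ⟨j, not_not.mp (Nat.find_min hex (by omega)), fun h0 ↦ Nat.find_spec hex ?_⟩
  rw [hj]
  ext u
  simp [iteratedFDeriv_succ_apply_left, h0]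

theorem analyticAt_iteratedFDeriv [CompleteSpace F] {h : E → F} {w : E} (hh : AnalyticAt 𝕜 h w)
    (j : ℕ) : AnalyticAt 𝕜 (iteratedFDeriv 𝕜 j h) w :=
  AnalyticOnNhd.iteratedFDeriv (s := {w}) (by simpa [AnalyticOnNhd]) j w rfl

end Charts

section FiniteFibres

open Module Metric

universe u

variable {𝕜 F : Type*} [RCLike 𝕜] [NormedAddCommGroup F] [NormedSpace 𝕜 F]

theorem finrank_range_comp_lt {K E E' F : Type*} [Field K] [AddCommGroup E] [Module K E]
    [AddCommGroup E'] [Module K E'] [AddCommGroup F] [Module K F] {A : E →ₗ[K] F}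
    {B : E' →ₗ[K] E} {ℓ : Dual K F} [FiniteDimensional K A.range] (h0 : ℓ ∘ₗ A ∘ₗ B = 0)
    (hne : ℓ ∘ₗ A ≠ 0) : finrank K (A ∘ₗ B).range < finrank K A.range := by
  refine Submodule.finrank_lt_finrank_of_lt <|
    (LinearMap.range_comp_le_range B A).lt_of_ne fun heq ↦ hne ?_
  rwa [← LinearMap.range_le_ker_iff, ← heq, LinearMap.range_le_ker_iff]

variable {E : Type u} [NormedAddCommGroup E] [NormedSpace 𝕜 E]

theorem finrank_range_fderiv_comp_lt [FiniteDimensional 𝕜 E] {E' : Type*} [NormedAddCommGroup E']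
    [NormedSpace 𝕜 E'] {G : E → F} {χ : E' → E} {ℓ : StrongDual 𝕜 F} {t : E'}
    (hG : DifferentiableAt 𝕜 G (χ t)) (hχ : DifferentiableAt 𝕜 χ t)
    (h0 : fderiv 𝕜 (ℓ ∘ G ∘ χ) t = 0) (hne : fderiv 𝕜 (ℓ ∘ G) (χ t) ≠ 0) :
    finrank 𝕜 (fderiv 𝕜 (G ∘ χ) t).range < finrank 𝕜 (fderiv 𝕜 G (χ t)).range := by
  rw [(ℓ.hasFDerivAt.comp t (hG.hasFDerivAt.comp t hχ.hasFDerivAt)).fderiv] at h0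
  rw [(ℓ.hasFDerivAt.comp _ hG.hasFDerivAt).fderiv] at hne
  rw [fderiv_comp t hG hχ]
  exact finrank_range_comp_lt (ℓ := ℓ) (congrArg ContinuousLinearMap.toLinearMap h0)
    fun h ↦ hne (ContinuousLinearMap.coe_injective h)

theorem finrank_eq_zero_of_fderiv_eq_zero_of_finite_fibres {G : E → F} {V : Set E}
    (hV : IsOpen V) (hne : V.Nonempty) (hG : DifferentiableOn 𝕜 G V)
    (hfib : ∀ y, {w ∈ V | G w = y}.Finite) (hzero : ∀ v ∈ V, fderiv 𝕜 G v = 0) :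
    finrank 𝕜 E = 0 := by
  let := NormedSpace.restrictScalars ℝ 𝕜 E
  obtain ⟨v, hv⟩ := hne
  obtain ⟨ε, hε, hball⟩ := isOpen_iff.mp hV v hv
  have hconst : ball v ε ⊆ {w ∈ V | G w = G v} := fun w hw ↦
    ⟨hball hw, isOpen_ball.is_const_of_fderiv_eq_zero (𝕜 := 𝕜) (convex_ball v ε).isPreconnected
      (hG.mono hball) (fun x hx ↦ hzero x (hball hx)) hw (mem_ball_self hε)⟩
  by_contra hpos
  have := nontrivial_of_finrank_pos (Nat.pos_of_ne_zero hpos)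
  have := Module.punctured_nhds_neBot 𝕜 E v
  exact infinite_of_mem_nhds v (ball_mem_nhds v hε) ((hfib _).subset hconst)

theorem finrank_le_of_finite_fibres [FiniteDimensional 𝕜 E] {G : E → F} {V : Set E} {r : ℕ}
    (hV : IsOpen V) (hne : V.Nonempty) (hG : AnalyticOnNhd 𝕜 G V)
    (hfib : ∀ y, {w ∈ V | G w = y}.Finite)
    (hr : ∀ v ∈ V, finrank 𝕜 (fderiv 𝕜 G v).range ≤ r) : finrank 𝕜 E ≤ r := by
  induction r generalizing E with
  | zero =>
    exact (finrank_eq_zero_of_fderiv_eq_zero_of_finite_fibres hV hne hG.differentiableOn hfib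
      fun v hv ↦ ContinuousLinearMap.coe_injective <|
        LinearMap.range_eq_bot.mp (by simpa using hr v hv)).le
  | succ r ih =>
    by_cases hzero : ∀ v ∈ V, fderiv 𝕜 G v = 0
    · exact (finrank_eq_zero_of_fderiv_eq_zero_of_finite_fibres hV hne hG.differentiableOn hfib
        hzero).trans_le (Nat.zero_le _)
    push Not at hzero
    obtain ⟨v, hv, hGv⟩ := hzero
    obtain ⟨ℓ, hℓ⟩ := exists_dual_fderiv_comp_ne_zero (hG v hv).differentiableAt hGv
    have hg : AnalyticAt 𝕜 (ℓ ∘ G) v := (ℓ.analyticAt _).comp (hG v hv)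
    have hopen : V ∩ {w | fderiv 𝕜 (ℓ ∘ G) w ≠ 0} ∈ 𝓝 v :=
      inter_mem (hV.mem_nhds hv) (hg.fderiv.continuousAt.eventually_ne hℓ)
    obtain ⟨hdim, χ, δ, hδ, hχ, hinj, hmaps, -⟩ := exists_hypersurface_chart hg hℓ hopen
    have hker : finrank 𝕜 (fderiv 𝕜 (ℓ ∘ G) v).ker ≤ r := by
      refine ih isOpen_ball (nonempty_ball.mpr hδ)
        (fun t ht ↦ (hG _ (hmaps ht).1.1).comp (hχ t ht)) (fun y ↦ ?_) (fun t ht ↦ ?_)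
      · exact .of_finite_image ((hfib y).subset <| image_subset_iff.mpr fun t ht ↦
          ⟨(hmaps ht.1).1.1, ht.2⟩) (hinj.mono fun t ht ↦ ht.1)
      · have hconst : ℓ ∘ G ∘ χ =ᶠ[𝓝 t] fun _ ↦ ℓ (G v) :=
          eventually_of_mem (isOpen_ball.mem_nhds ht) fun s hs ↦ (hmaps hs).2
        have hlt := finrank_range_fderiv_comp_lt (ℓ := ℓ) (hG _ (hmaps ht).1.1).differentiableAt
          (hχ t ht).differentiableAt (by simp [hconst.fderiv_eq]) (hmaps ht).1.2
        exact Nat.le_of_lt_succ (hlt.trans_le (hr _ (hmaps ht).1.1))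
    omega

end FiniteFibres


section Dimension

open Module

theorem dimH_image_le_of_forall_nhdsWithin {X Y : Type*} [TopologicalSpace X]
    [SecondCountableTopology X] [EMetricSpace Y] {f : X → Y} {s : Set X} {c : ENNReal}
    (h : ∀ x ∈ s, ∃ t ∈ 𝓝[s] x, dimH (f '' t) ≤ c) : dimH (f '' s) ≤ c := by
  choose! t ht hdim using h
  obtain ⟨u, hus, hu, hcover⟩ := TopologicalSpace.countable_cover_nhdsWithin ht
  calc dimH (f '' s) ≤ dimH (⋃ x ∈ u, f '' t x) := by
        rw [← image_iUnion₂]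
        exact dimH_mono (image_mono hcover)
    _ = ⨆ x ∈ u, dimH (f '' t x) := dimH_bUnion hu _
    _ ≤ c := iSup₂_le fun x hx ↦ hdim x (hus hx)

variable {𝕜 E F : Type*} [RCLike 𝕜] [NormedAddCommGroup E] [NormedSpace 𝕜 E]
  [FiniteDimensional 𝕜 E] [NormedAddCommGroup F] [NormedSpace 𝕜 F]

theorem dimH_image_le_finrank {φ : E → F} {V : Set E} (hφ : AnalyticOnNhd 𝕜 φ V) :
    dimH (φ '' V) ≤ (finrank ℝ 𝕜 * finrank 𝕜 E : ℕ) := by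
  let := NormedSpace.restrictScalars ℝ 𝕜 E
  have := FiniteDimensional.trans ℝ 𝕜 E
  have := FiniteDimensional.proper 𝕜 E
  calc dimH (φ '' V) ≤ dimH V := dimH_image_le_of_locally_lipschitzOn fun x hx ↦
        (hφ x hx).hasStrictFDerivAt.exists_lipschitzOnWith.imp fun K ⟨t, ht, hK⟩ ↦
          ⟨t, mem_nhdsWithin_of_mem_nhds ht, hK⟩
    _ ≤ dimH (univ : Set E) := dimH_mono (subset_univ V)
    _ = (finrank ℝ 𝕜 * finrank 𝕜 E : ℕ) := by
        rw [Real.dimH_univ_eq_finrank, Module.finrank_mul_finrank]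

/-- A zero of `h` around which `h` is not identically zero is a nonsingular zero of some iterated
derivative of `h`, so countably many smooth hypersurfaces cover the zeros of this kind. -/
theorem dimH_image_le_of_forall_levelSet {X : Type*} [EMetricSpace X] {φ : E → X} {h : E → F}
    {S : Set E} {c : ENNReal} [CompleteSpace F] (hh : ∀ w ∈ S, AnalyticAt 𝕜 h w)
    (h0 : ∀ w ∈ S, h w = 0) (hne : ∀ w ∈ S, ¬ h =ᶠ[𝓝 w] 0)
    (hlevel : ∀ w ∈ S, ∀ g : E → 𝕜, AnalyticAt 𝕜 g w → fderiv 𝕜 g w ≠ 0 →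
      ∃ t ∈ 𝓝[S ∩ g ⁻¹' {g w}] w, dimH (φ '' t) ≤ c) :
    dimH (φ '' S) ≤ c := by
  have := FiniteDimensional.proper 𝕜 E
  let T (j : ℕ) : Set E :=
    {w ∈ S | iteratedFDeriv 𝕜 j h w = 0 ∧ fderiv 𝕜 (iteratedFDeriv 𝕜 j h) w ≠ 0}
  have hcover : S ⊆ ⋃ j, T j := fun w hw ↦
    let ⟨j, hj⟩ := exists_iteratedFDeriv_eq_zero_fderiv_ne_zero (hh w hw) (h0 w hw) (hne w hw)
    mem_iUnion.mpr ⟨j, hw, hj⟩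
  refine (dimH_mono (image_mono hcover)).trans ?_
  rw [image_iUnion, dimH_iUnion]
  refine iSup_le fun j ↦ dimH_image_le_of_forall_nhdsWithin ?_
  rintro w ⟨hw, hwj, hdw⟩
  have hana := analyticAt_iteratedFDeriv (hh w hw) j
  obtain ⟨ℓ, hℓ⟩ := exists_dual_fderiv_comp_ne_zero hana.differentiableAt hdw
  obtain ⟨t, ht, hdim⟩ := hlevel w hw (ℓ ∘ iteratedFDeriv 𝕜 j h) ((ℓ.analyticAt _).comp hana) hℓ
  have hsub : T j ⊆ S ∩ (ℓ ∘ iteratedFDeriv 𝕜 j h) ⁻¹' {(ℓ ∘ iteratedFDeriv 𝕜 j h) w} :=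
    fun x hx ↦ ⟨hx.1, by simp [hwj, hx.2.1]⟩
  exact ⟨t, nhdsWithin_mono w hsub ht, hdim⟩

end Dimension

section Rank

open Module

variable {𝕜 : Type*} [RCLike 𝕜]

theorem analyticAt_det {E : Type*} [NormedAddCommGroup E] [NormedSpace 𝕜 E]
    [FiniteDimensional 𝕜 E] (A : E →L[𝕜] E) :
    AnalyticAt 𝕜 (fun B : E →L[𝕜] E ↦ LinearMap.det (B : E →ₗ[𝕜] E)) A := by
  let b := finBasis 𝕜 E
  have hentry (i j : Fin (finrank 𝕜 E)) :
      AnalyticAt 𝕜 (fun B : E →L[𝕜] E ↦ b.coord i (B (b j))) A :=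
    ((LinearMap.toContinuousLinearMap (b.coord i)).comp
      (ContinuousLinearMap.apply 𝕜 E (b j))).analyticAt A
  simp only [← LinearMap.det_toMatrix b, Matrix.det_apply', LinearMap.toMatrix_apply]
  exact Finset.analyticAt_fun_sum _ fun σ _ ↦ analyticAt_const.mul <|
    Finset.analyticAt_fun_prod _ fun i _ ↦ hentry _ _

theorem exists_analyticOnNhd_eq_zero_of_finrank_range_lt {E F : Type*} [NormedAddCommGroup E]
    [NormedSpace 𝕜 E] [NormedAddCommGroup F] [NormedSpace 𝕜 F] [FiniteDimensional 𝕜 F]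
    (A : E →L[𝕜] F) :
    ∃ D : (E →L[𝕜] F) → 𝕜, AnalyticOnNhd 𝕜 D univ ∧ D A ≠ 0 ∧
      ∀ B : E →L[𝕜] F, finrank 𝕜 B.range < finrank 𝕜 A.range → D B = 0 := by
  obtain ⟨σ, hσ⟩ := (A : E →ₗ[𝕜] F).rangeRestrict.exists_rightInverse_of_surjective
    (LinearMap.range_rangeRestrict _)
  obtain ⟨π, hπ⟩ := Submodule.ClosedComplemented.of_finiteDimensional A.range
  let α : A.range →L[𝕜] E := LinearMap.toContinuousLinearMap σ
  let T : (E →L[𝕜] F) →L[𝕜] A.range →L[𝕜] A.range :=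
    (ContinuousLinearMap.compL 𝕜 A.range F A.range π).comp
      ((ContinuousLinearMap.compL 𝕜 A.range E F).flip α)
  have hTA : (T A : A.range →ₗ[𝕜] A.range) = LinearMap.id := LinearMap.ext fun y ↦
    (congrArg π (congrArg Subtype.val (LinearMap.congr_fun hσ y))).trans (hπ y)
  refine ⟨fun B ↦ LinearMap.det (T B : A.range →ₗ[𝕜] A.range),
    fun B _ ↦ (analyticAt_det (T B)).comp (T.analyticAt B), by simp [hTA], fun B hB ↦ ?_⟩
  refine LinearMap.det_eq_zero_iff_ker_ne_bot.mpr fun hker ↦ hB.not_ge ?_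
  calc finrank 𝕜 A.range
      = finrank 𝕜 (T B).range :=
        (LinearMap.finrank_range_of_inj (LinearMap.ker_eq_bot.mp hker)).symm
    _ ≤ finrank 𝕜 (B.range.map (π : F →ₗ[𝕜] A.range)) := Submodule.finrank_mono <|
        LinearMap.range_le_iff_comap.mpr <| eq_top_iff.mpr fun y _ ↦ ⟨B (α y), ⟨α y, rfl⟩, rfl⟩
    _ ≤ finrank 𝕜 B.range := Submodule.finrank_map_le _ _

end Rank

section RankLocus

open Module Metric

universe u

variable {𝕜 F₁ F₂ : Type*} [RCLike 𝕜] [NormedAddCommGroup F₁] [NormedSpace 𝕜 F₁]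
  [NormedAddCommGroup F₂] [NormedSpace 𝕜 F₂] [FiniteDimensional 𝕜 F₂]
  {E : Type u} [NormedAddCommGroup E] [NormedSpace 𝕜 E] [FiniteDimensional 𝕜 E]

theorem finrank_le_of_finite_fibres_of_injOn {f : F₁ → F₂} {φ : E → F₁} {V : Set E} {W : Set F₁}
    {r : ℕ} (hf : AnalyticOnNhd 𝕜 f W) (hfib : ∀ y, {x ∈ W | f x = y}.Finite) (hV : IsOpen V)
    (hne : V.Nonempty) (hφ : AnalyticOnNhd 𝕜 φ V) (hinj : InjOn φ V) (hmaps : MapsTo φ V W)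
    (hr : ∀ v ∈ V, finrank 𝕜 (fderiv 𝕜 f (φ v)).range ≤ r) : finrank 𝕜 E ≤ r := by
  refine finrank_le_of_finite_fibres hV hne (hf.comp hφ hmaps) (fun y ↦ ?_) fun v hv ↦ ?_
  · exact .of_finite_image ((hfib y).subset <| image_subset_iff.mpr fun t ht ↦
      ⟨hmaps ht.1, ht.2⟩) (hinj.mono fun t ht ↦ ht.1)
  · rw [fderiv_comp v (hf _ (hmaps hv)).differentiableAt (hφ v hv).differentiableAt]
    exact (Submodule.finrank_mono (LinearMap.range_comp_le_range _ _)).trans (hr v hv)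

theorem dimH_image_finrank_range_fderiv_le {f : F₁ → F₂} {φ : E → F₁} {V : Set E} {W : Set F₁}
    {r : ℕ} (hf : AnalyticOnNhd 𝕜 f W) (hfib : ∀ y, {x ∈ W | f x = y}.Finite) (hV : IsOpen V)
    (hφ : AnalyticOnNhd 𝕜 φ V) (hinj : InjOn φ V) (hmaps : MapsTo φ V W) :
    dimH (φ '' {v ∈ V | finrank 𝕜 (fderiv 𝕜 f (φ v)).range ≤ r}) ≤ (finrank ℝ 𝕜 * r : ℕ) := by
  induction hd : finrank 𝕜 E using Nat.strong_induction_on generalizing E with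
  | _ d ih =>
  have := FiniteDimensional.complete 𝕜 E
  have := FiniteDimensional.complete 𝕜 F₂
  have := FiniteDimensional.proper 𝕜 E
  let := NormedSpace.restrictScalars ℝ 𝕜 E
  refine dimH_image_le_of_forall_nhdsWithin ?_
  rintro v ⟨hv, -⟩
  obtain ⟨ε, hε, hball⟩ := isOpen_iff.mp hV v hv
  by_cases hall : ∀ x ∈ ball v ε, finrank 𝕜 (fderiv 𝕜 f (φ x)).range ≤ r
  · have hE : finrank 𝕜 E ≤ r := finrank_le_of_finite_fibres_of_injOn hf hfib isOpen_ball
      (nonempty_ball.mpr hε) (hφ.mono hball) (hinj.mono hball) (hmaps.mono_left hball) hall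
    refine ⟨ball v ε, mem_nhdsWithin_of_mem_nhds (ball_mem_nhds v hε),
      (dimH_image_le_finrank (hφ.mono hball)).trans ?_⟩
    exact_mod_cast Nat.mul_le_mul_left _ hE
  push Not at hall
  obtain ⟨x₁, hx₁, hrx₁⟩ := hall
  obtain ⟨D, hD, hD₁, hD0⟩ :=
    exists_analyticOnNhd_eq_zero_of_finrank_range_lt (fderiv 𝕜 f (φ x₁))
  have hh : AnalyticOnNhd 𝕜 (fun x ↦ D (fderiv 𝕜 f (φ x))) (ball v ε) := fun x hx ↦
    (hD _ trivial).fun_comp ((hf _ (hmaps (hball hx))).fderiv.fun_comp (hφ x (hball hx)))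
  refine ⟨_, inter_mem_nhdsWithin _ (ball_mem_nhds v hε), dimH_image_le_of_forall_levelSet
    (fun w hw ↦ hh w hw.2) (fun w hw ↦ hD0 _ (hw.1.2.trans_lt hrx₁)) (fun w hw h0 ↦ hD₁ <|
      hh.eqOn_zero_of_preconnected_of_eventuallyEq_zero (convex_ball v ε).isPreconnected hw.2 h0
        hx₁) ?_⟩
  intro w hw g hg hgw
  obtain ⟨hker, χ, δ, -, hχ, hχinj, hχmaps, hχmem⟩ :=
    exists_hypersurface_chart hg hgw (hV.mem_nhds hw.1.1)
  have hdim := ih _ (by omega) isOpen_ball (hφ.comp hχ fun t ht ↦ (hχmaps ht).1)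
    (hinj.comp hχinj fun t ht ↦ (hχmaps ht).1) (fun t ht ↦ hmaps (hχmaps ht).1) rfl
  rw [image_comp] at hdim
  refine ⟨_, ?_, hdim⟩
  filter_upwards [nhdsWithin_mono w inter_subset_right hχmem, self_mem_nhdsWithin]
  rintro _ ⟨t, ht, rfl⟩ hx
  exact ⟨t, ⟨ht, hx.1.1.2⟩, rfl⟩

end RankLocus

theorem corank_locus_dimension_general (n p k : ℕ) (f : Cn n → Cn p)
    (hf0 : f 0 = 0) (hfa : AnalyticAt ℂ f 0) (hfin : FiniteGerm f) :
    ∀ᶠ V in (𝓝 (0 : Cn n)).smallSets,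
      dimH ({x : Cn n |
          k + Module.finrank ℂ (LinearMap.range ((fderiv ℂ f x) : Cn n →ₗ[ℂ] Cn p)) ≤ n}
        ∩ V) ≤ ((2 * (n - k) : ℕ) : ENNReal) := by
  obtain ⟨W, hW, hfib⟩ := exists_nhds_finite_fibres hf0 hfa hfin
  obtain ⟨U, hUW, hU, hU0⟩ := mem_nhds_iff.mp (inter_mem hW hfa.eventually_analyticAt)
  have hdim := dimH_image_finrank_range_fderiv_le (r := n - k) (fun x hx ↦ (hUW hx).2)
    (fun y ↦ (hfib y).subset fun x hx ↦ ⟨(hUW hx.1).1, hx.2⟩) hU analyticOnNhd_id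
    (injOn_id U) (mapsTo_id U)
  rw [Complex.finrank_real_complex, image_id'] at hdim
  refine eventually_smallSets.mpr ⟨U, hU.mem_nhds hU0, fun V hV ↦ (dimH_mono ?_).trans hdim⟩
  exact fun x ⟨hx, hxV⟩ ↦ ⟨hV hxV, Nat.le_sub_of_add_le' hx⟩

/-- **Proposition (statement 17).** For a finite map germ `f : (ℂⁿ,0) → (ℂⁿ⁺¹,0)` and
`Σ̂ᵏ(f) = {x : corank df_x ≥ k}`, the germ of `Σ̂ᵏ(f)` at `0` has complex dimension at
most `n - k` (its Hausdorff dimension near `0` is at most `2(n-k)`). -/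
theorem corank_locus_dimension (n k : ℕ) (f : Cn n → Cn (n+1))
    (hf0 : f 0 = 0) (hfa : AnalyticAt ℂ f 0) (hfin : FiniteGerm f) :
    ∀ᶠ V in (𝓝 (0 : Cn n)).smallSets,
      dimH ({x : Cn n |
          k + Module.finrank ℂ (LinearMap.range ((fderiv ℂ f x) : Cn n →ₗ[ℂ] Cn (n+1))) ≤ n}
        ∩ V) ≤ ((2 * (n - k) : ℕ) : ENNReal) :=
  corank_locus_dimension_general n (n + 1) k f hf0 hfa hfin
end
end
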